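/- If a compact topological space K admits a topological embedding into a surface F, then K admits a topological embedding into some compact surface (a compact topological 2-manifold without boundary). -/

import Mathlib

open Topology

/-- A surface: a nonempty Hausdorff, second-countable space in which every point
has an open neighborhood homeomorphic to an open subset of ℝ². -/
def IsSurface (F : Type*) [TopologicalSpace F] : Prop :=
  Nonempty F ∧ T2Space F ∧ SecondCountableTopology F ∧
    ∀ x : F, ∃ (U : Set F) (V : Set (EuclideanSpace ℝ (Fin 2))),
      IsOpen U ∧ x ∈ U ∧ IsOpen V ∧ Nonempty (↥U ≃ₜ ↥V)

open Set Filter Metric Complex in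
theorem montel_aux {U : Set ℂ} (hU : IsOpen U) (f : ℕ → ℂ → ℂ)
    (hd : ∀ n, DifferentiableOn ℂ (f n) U) (hb : ∀ n, ∀ z ∈ U, ‖f n z‖ ≤ 1) :
    ∃ g : ℂ → ℂ, TendstoLocallyUniformlyOn f g (hyperfilter ℕ : Filter ℕ) U := by
  have h1 : ∀ z, ∃ w, z ∈ U → Tendsto (fun n => f n z) (hyperfilter ℕ : Filter ℕ) (𝓝 w) := by
    intro z
    by_cases hz : z ∈ U
    · have := (isCompact_closedBall (0:ℂ) 1).ultrafilter_le_nhds ((hyperfilter ℕ).map (fun n => f n z))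
        (by
          rw [le_principal_iff, Ultrafilter.mem_coe, Ultrafilter.mem_map]
          refine Filter.univ_mem' ?_
          intro n
          simpa using hb n z hz)
      obtain ⟨w, _, hw⟩ := this
      exact ⟨w, fun _ => hw⟩
    · exact ⟨0, fun h => absurd h hz⟩
  choose g hg using h1
  refine ⟨g, ?_⟩
  rw [Metric.tendstoLocallyUniformlyOn_iff]
  intro ε hε x hx
  obtain ⟨R, hR, hRU⟩ := Metric.isOpen_iff.1 hU x hx
  set r := R / 2 with hr
  have hr0 : 0 < r := by positivity
  have hlip : ∀ n, ∀ y ∈ ball x r, ‖f n y - f n x‖ ≤ (1 / r) * ‖y - x‖ := by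
    intro n y hy
    refine (convex_ball x r).norm_image_sub_le_of_norm_deriv_le (𝕜 := ℂ) (f := f n) ?_ ?_ (mem_ball_self hr0) hy
    · intro z hz
      exact (hd n).differentiableAt (hU.mem_nhds (hRU (ball_subset_ball (by linarith) hz)))
    · intro z hz
      have hsub : closedBall z r ⊆ U := by
        intro t ht
        apply hRU
        rw [mem_ball] at *
        rw [mem_closedBall] at ht
        calc dist t x ≤ dist t z + dist z x := dist_triangle _ _ _
          _ < R := by linarith
      refine Complex.norm_deriv_le_of_forall_mem_sphere_norm_le hr0 ?_ ?_
      · refine ((hd n).mono ?_).diffContOnCl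
        rw [closure_ball z hr0.ne']
        exact hsub
      · intro t ht
        exact hb n t (hsub (sphere_subset_closedBall ht))
  have hlipg : ∀ y ∈ ball x r, ‖g y - g x‖ ≤ (1 / r) * ‖y - x‖ := by
    intro y hy
    have hyU : y ∈ U := hRU (ball_subset_ball (by linarith) hy)
    exact le_of_tendsto ((hg y hyU).sub (hg x hx)).norm (Eventually.of_forall fun n => hlip n y hy)
  refine ⟨ball x (min r (ε * r / 3)), mem_nhdsWithin_of_mem_nhds (ball_mem_nhds _ (by positivity)), ?_⟩
  filter_upwards [(Metric.tendsto_nhds.1 (hg x hx)) (ε / 3) (by positivity)] with n hn y hy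
  have hy1 : y ∈ ball x r := ball_subset_ball (min_le_left _ _) hy
  have hy2 : ‖y - x‖ < ε * r / 3 := by
    rw [← dist_eq_norm]; exact lt_of_lt_of_le hy (min_le_right _ _)
  have e1 : (1 / r) * ‖y - x‖ < ε / 3 := by
    rw [div_mul_eq_mul_div, one_mul, div_lt_iff₀ hr0]; linarith
  have a1 := hlipg y hy1
  have a2 := hlip n y hy1
  rw [dist_eq_norm] at *
  have : g y - f n y = (g y - g x) - (f n x - g x) - (f n y - f n x) := by ring
  rw [this]
  calc _ ≤ ‖(g y - g x) - (f n x - g x)‖ + ‖f n y - f n x‖ := norm_sub_le _ _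
    _ ≤ ‖g y - g x‖ + ‖f n x - g x‖ + ‖f n y - f n x‖ := by gcongr; exact norm_sub_le _ _
    _ < ε := by linarith

open Set Filter Metric Complex in
theorem hurwitz_aux {U : Set ℂ} (hU : IsOpen U) (hc : IsPreconnected U) {f : ℕ → ℂ → ℂ} {g : ℂ → ℂ}
    {l : Filter ℕ} [NeBot l] (h : TendstoLocallyUniformlyOn f g l U)
    (hd : ∀ n, DifferentiableOn ℂ (f n) U) (hi : ∀ n, InjOn (f n) U) :
    InjOn g U ∨ ∀ x ∈ U, ∀ y ∈ U, g x = g y := by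
  by_contra hcon
  push Not at hcon
  obtain ⟨h1, x0, hx0, y0, hy0, hxy⟩ := hcon
  have hgd : DifferentiableOn ℂ g U := h.differentiableOn (Eventually.of_forall hd) hU
  simp only [InjOn] at h1
  push Not at h1
  obtain ⟨a, ha, b, hb, hab, hne⟩ := h1
  set G : ℂ → ℂ := fun z => g z - g a with hG
  have hGa : AnalyticOnNhd ℂ G U := (hgd.sub_const (g a)).analyticOnNhd hU
  rcases (hGa b hb).eventually_eq_zero_or_eventually_ne_zero with h0 | h0
  · have := hGa.eqOn_zero_of_preconnected_of_eventuallyEq_zero hc hb h0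
    have e1 := this hx0
    have e2 := this hy0
    simp only [hG, Pi.zero_apply, sub_eq_zero] at e1 e2
    exact hxy (e1.trans e2.symm)
  · rw [eventually_nhdsWithin_iff] at h0
    have h2 : ∀ᶠ z in 𝓝 b, z ∈ U ∧ z ≠ a ∧ (z ∈ ({b}ᶜ : Set ℂ) → G z ≠ 0) := by
      filter_upwards [hU.mem_nhds hb, isOpen_ne.mem_nhds hne.symm, h0] with z a1 a2 a3
      exact ⟨a1, a2, a3⟩
    obtain ⟨R, hR, hRs⟩ := Metric.eventually_nhds_iff_ball.1 h2
    set r := R / 2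
    have hr : 0 < r := by positivity
    have hs : closedBall b r ⊆ ball b R := closedBall_subset_ball (by simp only [r]; linarith)
    have hsph : ∀ z ∈ sphere b r, G z ≠ 0 := by
      intro z hz
      refine (hRs z (hs (sphere_subset_closedBall hz))).2.2 ?_
      rintro rfl
      simp at hz; linarith
    obtain ⟨z1, hz1, hmin⟩ := (isCompact_sphere b r).exists_isMinOn
      (NormedSpace.sphere_nonempty.2 hr.le) (f := fun z => ‖G z‖)
      ((hGa.continuousOn.mono (fun z hz => (hRs z (hs (sphere_subset_closedBall hz))).1)).norm)
    set m := ‖G z1‖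
    have hm : 0 < m := norm_pos_iff.2 (hsph z1 hz1)
    have hun := (tendstoLocallyUniformlyOn_iff_forall_isCompact hU).1 h (sphere b r)
      (fun z hz => (hRs z (hs (sphere_subset_closedBall hz))).1) (isCompact_sphere b r)
    rw [Metric.tendstoUniformlyOn_iff] at hun
    have hta := h.tendsto_at ha
    have htb := h.tendsto_at hb
    have key : ∀ᶠ n in l, m / 2 ≤ ‖f n b - f n a‖ := by
      filter_upwards [hun (m/4) (by positivity), Metric.tendsto_nhds.1 hta (m/4) (by positivity)] with n hn1 hn2
      have hnz : ∀ z ∈ closedBall b r, f n z - f n a ≠ 0 := by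
        intro z hz hz0
        have := hRs z (hs hz)
        exact this.2.1 (hi n this.1 ha (sub_eq_zero.1 hz0))
      have hfr : ∀ z ∈ sphere b r, m / 2 ≤ ‖f n z - f n a‖ := by
        intro z hz
        have e1 := hn1 z hz
        have e2 : m ≤ ‖G z‖ := hmin hz
        rw [dist_eq_norm] at e1 hn2
        have : G z = (f n z - f n a) + (g z - f n z) + (f n a - g a) := by simp only [hG]; ring
        rw [this] at e2
        have := norm_add_le ((f n z - f n a) + (g z - f n z)) (f n a - g a)
        have := norm_add_le (f n z - f n a) (g z - f n z)
        linarith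
      have := Complex.norm_le_of_forall_mem_frontier_norm_le (f := fun z => (f n z - f n a)⁻¹)
        (U := ball b r) isBounded_ball (C := (m/2)⁻¹) ?_ ?_ (z := b) (subset_closure (mem_ball_self hr))
      · rw [norm_inv] at this
        have hp : 0 < ‖f n b - f n a‖ := norm_pos_iff.2 (hnz b (mem_closedBall_self hr.le))
        exact (inv_le_inv₀ hp (by positivity)).1 this
      · apply DifferentiableOn.diffContOnCl
        rw [closure_ball b hr.ne']
        exact (((hd n).mono (fun z hz => (hRs z (hs hz)).1)).sub_const _).inv hnz
      · intro z hz
        rw [frontier_ball b hr.ne'] at hz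
        rw [norm_inv]
        exact inv_anti₀ (by positivity) (hfr z hz)
    have := ge_of_tendsto (htb.sub hta).norm key
    rw [hab, sub_self, norm_zero] at this
    linarith

open Complex ComplexConjugate in
theorem mob_den {v k : ℂ} (hv : ‖v‖ < 1) (hk : ‖k‖ ≤ 1) : 1 - conj v * k ≠ 0 := by
  intro h
  have : conj v * k = 1 := (sub_eq_zero.1 h).symm
  have h2 : ‖conj v * k‖ = 1 := by rw [this]; simp
  rw [norm_mul, RCLike.norm_conj] at h2
  nlinarith [norm_nonneg v, norm_nonneg k]

open Complex ComplexConjugate in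
theorem mob_norm {v k : ℂ} (hv : ‖v‖ < 1) (hk : ‖k‖ < 1) : ‖(k - v) / (1 - conj v * k)‖ < 1 := by
  have h0 := mob_den hv hk.le
  rw [norm_div, div_lt_one (norm_pos_iff.2 h0)]
  have : ‖k - v‖ ^ 2 < ‖1 - conj v * k‖ ^ 2 := by
    have e1 : ‖v‖ ^ 2 < 1 := by nlinarith [norm_nonneg v]
    have e2 : ‖k‖ ^ 2 < 1 := by nlinarith [norm_nonneg k]
    rw [← Complex.normSq_eq_norm_sq] at *
    rw [← Complex.normSq_eq_norm_sq] at *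
    simp only [Complex.normSq_apply, Complex.sub_re, Complex.sub_im, Complex.mul_re, Complex.mul_im, Complex.conj_re, Complex.conj_im, Complex.one_re, Complex.one_im] at *
    nlinarith
  exact lt_of_pow_lt_pow_left₀ 2 (norm_nonneg _) this

open Complex ComplexConjugate in
theorem mob_inj {v k k' : ℂ} (hv : ‖v‖ < 1) (hk : ‖k‖ < 1) (hk' : ‖k'‖ < 1)
    (h : (k - v) / (1 - conj v * k) = (k' - v) / (1 - conj v * k')) : k = k' := by
  rw [div_eq_div_iff (mob_den hv hk.le) (mob_den hv hk'.le)] at h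
  have : (k - k') * (1 - conj v * v) = 0 := by linear_combination h
  rcases mul_eq_zero.1 this with h | h
  · exact sub_eq_zero.1 h
  · exact absurd h (mob_den hv hv.le)

open Complex ComplexConjugate in
theorem mob_deriv {v k' : ℂ} {f : ℂ → ℂ} {z : ℂ} (hv : ‖v‖ < 1) (hk : ‖f z‖ < 1) (hf : HasDerivAt f k' z) :
    HasDerivAt (fun z => (f z - v) / (1 - conj v * f z))
      (k' * (1 - conj v * v) / (1 - conj v * f z) ^ 2) z := by
  have := (hf.sub_const v).div ((hf.const_mul (conj v)).const_sub 1) (mob_den hv hk.le)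
  refine this.congr_deriv ?_
  congr 1
  ring

open Set Filter Metric Complex in
theorem sqrt_deriv {U : Set ℂ} (hU : IsOpen U) {h k : ℂ → ℂ} (hk : ContinuousOn k U) {h' x : ℂ} (hx : x ∈ U)
    (hh : HasDerivAt h h' x) (hkh : ∀ z, k z ^ 2 = h z) (h0 : h x ≠ 0) :
    HasDerivAt k (h' / (2 * k x)) x := by
  have hkx : k x ≠ 0 := by
    intro h1; apply h0; rw [← hkh, h1]; simp
  rw [hasDerivAt_iff_tendsto_slope] at hh ⊢
  have hkc : ContinuousAt k x := hk.continuousAt (hU.mem_nhds hx)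
  have h1 : Tendsto (fun z => k z + k x) (𝓝[≠] x) (𝓝 (2 * k x)) := by
    have : Tendsto (fun z => k z + k x) (𝓝 x) (𝓝 (k x + k x)) := hkc.tendsto.add tendsto_const_nhds
    rw [← two_mul] at this
    exact this.mono_left nhdsWithin_le_nhds
  have h2 := hh.div h1 (by simpa using hkx)
  refine h2.congr' ?_
  have h3 : ∀ᶠ z in 𝓝[≠] x, k z + k x ≠ 0 := h1.eventually_ne (by simpa using hkx)
  filter_upwards [h3] with z hz
  simp only [Pi.div_apply, slope_def_field]
  rw [← hkh, ← hkh, sq_sub_sq]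
  field_simp

open Set Filter Metric Complex ComplexConjugate in
theorem rmt_bounded {U : Set ℂ} (hU : IsOpen U) (hb : Bornology.IsBounded U) (hs : IsSimplyConnected U)
    (hne : U.Nonempty) :
    ∃ f : ℂ → ℂ, DifferentiableOn ℂ f U ∧ InjOn f U ∧ f '' U = ball 0 1 := by
  obtain ⟨z0, hz0⟩ := hne
  have hpc : IsPreconnected U := by
    have := hs.isPathConnected
    exact this.isConnected.isPreconnected
  obtain ⟨R, hR0, hR⟩ : ∃ R > 0, U ⊆ ball z0 R := by
    obtain ⟨R, hR⟩ := hb.subset_ball z0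
    exact ⟨max R 1, by positivity, hR.trans (ball_subset_ball (le_max_left _ _))⟩
  obtain ⟨r, hr0, hr⟩ := Metric.isOpen_iff.1 hU z0 hz0
  set Fam : Set (ℂ → ℂ) := {f | DifferentiableOn ℂ f U ∧ MapsTo f U (ball 0 1) ∧ InjOn f U ∧ f z0 = 0} with hFam
  have hbd : ∀ f : ℂ → ℂ, DifferentiableOn ℂ f U → (∀ z ∈ U, ‖f z‖ ≤ 1) → ‖deriv f z0‖ ≤ 1 / (r / 2) := by
    intro f hf hf1
    have hsub : closedBall z0 (r/2) ⊆ U := (closedBall_subset_ball (by linarith)).trans hr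
    refine Complex.norm_deriv_le_of_forall_mem_sphere_norm_le (by positivity) ?_ ?_
    · refine (hf.mono ?_).diffContOnCl
      rw [closure_ball z0 (by positivity)]
      exact hsub
    · intro z hz
      exact hf1 z (hsub (sphere_subset_closedBall hz))
  set D : Set ℝ := (fun f => ‖deriv f z0‖) '' Fam with hD
  have hDb : BddAbove D := by
    refine ⟨1 / (r/2), ?_⟩
    rintro _ ⟨f, hf, rfl⟩
    exact hbd f hf.1 (fun z hz => (mem_ball_zero_iff.1 (hf.2.1 hz)).le)
  have hf0 : (fun z => (z - z0) / (R:ℂ)) ∈ Fam := by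
    refine ⟨by fun_prop, ?_, ?_, by simp⟩
    · intro z hz
      have := hR hz
      rw [mem_ball, dist_eq_norm] at this
      simp only [mem_ball, dist_zero_right, norm_div, Complex.norm_real, Real.norm_eq_abs, abs_of_pos hR0]
      rwa [div_lt_one hR0]
    · intro x _ y _ hxy
      have : (R:ℂ) ≠ 0 := by exact_mod_cast hR0.ne'
      simpa [div_left_inj' this] using hxy
  have hpos : 0 < sSup D := by
    refine lt_of_lt_of_le ?_ (le_csSup hDb ⟨_, hf0, rfl⟩)
    have : HasDerivAt (fun z => (z - z0) / (R:ℂ)) (1 / R) z0 := ((hasDerivAt_id z0).sub_const z0).div_const _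
    simp only [this.deriv]
    simp [hR0.ne']
  obtain ⟨u, _, hu, huD⟩ := exists_seq_tendsto_sSup (⟨_, _, hf0, rfl⟩ : D.Nonempty) hDb
  choose f hf hfu using huD
  obtain ⟨g, hg⟩ := montel_aux hU f (fun n => (hf n).1) (fun n z hz => (mem_ball_zero_iff.1 ((hf n).2.1 hz)).le)
  have hgd : DifferentiableOn ℂ g U := hg.differentiableOn (Eventually.of_forall fun n => (hf n).1) hU
  have hgder : ‖deriv g z0‖ = sSup D := by
    have h1 := (hg.deriv (Eventually.of_forall fun n => (hf n).1) hU).tendsto_at hz0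
    have h2 : Tendsto u (hyperfilter ℕ : Filter ℕ) (𝓝 (sSup D)) := hu.mono_left Nat.hyperfilter_le_atTop
    refine tendsto_nhds_unique h1.norm (h2.congr fun n => ?_)
    exact (hfu n).symm
  have hgz0 : g z0 = 0 := by
    refine tendsto_nhds_unique (hg.tendsto_at hz0) (tendsto_const_nhds.congr fun n => ?_)
    exact ((hf n).2.2.2).symm
  have hnc : ¬ ∀ x ∈ U, ∀ y ∈ U, g x = g y := by
    intro hc
    have : g =ᶠ[𝓝 z0] fun _ => g z0 := by
      filter_upwards [hU.mem_nhds hz0] with z hz using hc z hz z0 hz0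
    have h1 := this.deriv_eq
    rw [deriv_const] at h1
    rw [h1, norm_zero] at hgder
    linarith
  have hginj : InjOn g U := by
    rcases hurwitz_aux hU hpc hg (fun n => (hf n).1) (fun n => (hf n).2.2.1) with h | h
    · exact h
    · exact absurd h hnc
  have hgle : ∀ z ∈ U, ‖g z‖ ≤ 1 := fun z hz =>
    le_of_tendsto (hg.tendsto_at hz).norm (Eventually.of_forall fun n => (mem_ball_zero_iff.1 ((hf n).2.1 hz)).le)
  have hgopen : IsOpen (g '' U) := by
    rcases (hgd.analyticOnNhd hU).is_constant_or_isOpen hpc with ⟨w, hw⟩ | h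
    · exact absurd (fun x hx y hy => (hw x hx).trans (hw y hy).symm) hnc
    · exact h U subset_rfl hU
  have hgball : g '' U ⊆ ball 0 1 := by
    rw [← interior_closedBall (0:ℂ) one_ne_zero]
    refine interior_maximal ?_ hgopen
    rintro _ ⟨z, hz, rfl⟩
    simpa using hgle z hz
  refine ⟨g, hgd, hginj, hgball.antisymm ?_⟩
  intro w hw
  by_contra hwn
  rw [mem_ball_zero_iff] at hw
  have hglt : ∀ z ∈ U, ‖g z‖ < 1 := fun z hz => by simpa using hgball ⟨z, hz, rfl⟩
  set h : ℂ → ℂ := fun z => (g z - w) / (1 - conj w * g z) with hh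
  have hhne : ∀ z ∈ U, h z ≠ 0 := by
    intro z hz h0
    simp only [hh, div_eq_zero_iff, sub_eq_zero (a := g z)] at h0
    rcases h0 with h0 | h0
    · exact hwn ⟨z, hz, h0⟩
    · exact mob_den hw (hglt z hz).le h0
  have hhd : ∀ z ∈ U, HasDerivAt h (deriv g z * (1 - conj w * w) / (1 - conj w * g z) ^ 2) z := fun z hz =>
    mob_deriv hw (hglt z hz) (hgd.differentiableAt (hU.mem_nhds hz)).hasDerivAt
  -- square root
  obtain ⟨k0, hk0c, hk0⟩ := Complex.exists_continuousOn_pow_eq (n := 2) hs hU (g := h)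
    (fun z hz => (hhd z hz).continuousAt.continuousWithinAt) (by rintro ⟨z, hz, h0⟩; exact hhne z hz h0) two_ne_zero
  set v := k0 z0 with hv
  have hk0n : ∀ z ∈ U, ‖k0 z‖ < 1 := by
    intro z hz
    have h1 : ‖h z‖ < 1 := mob_norm hw (hglt z hz)
    rw [← hk0, norm_pow] at h1
    by_contra hc
    push Not at hc
    nlinarith
  have hvn : ‖v‖ < 1 := hk0n z0 hz0
  have hk0d : ∀ z ∈ U, HasDerivAt k0 (deriv g z * (1 - conj w * w) / (1 - conj w * g z) ^ 2 / (2 * k0 z)) z :=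
    fun z hz => sqrt_deriv hU hk0c hz (hhd z hz) hk0 (hhne z hz)
  set F : ℂ → ℂ := fun z => (k0 z - v) / (1 - conj v * k0 z) with hF
  have hFd := fun z hz => mob_deriv hvn (hk0n z hz) (hk0d z hz)
  have hFF : F ∈ Fam := by
    refine ⟨fun z hz => (hFd z hz).differentiableAt.differentiableWithinAt, ?_, ?_, ?_⟩
    · intro z hz
      exact mem_ball_zero_iff.2 (mob_norm hvn (hk0n z hz))
    · intro x hx y hy hxy
      have h1 := mob_inj hvn (hk0n x hx) (hk0n y hy) hxy
      have h2 : h x = h y := by rw [← hk0, ← hk0, h1]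
      exact hginj hx hy (mob_inj hw (hglt x hx) (hglt y hy) h2)
    · simp [hF, hv]
  have hle : ‖deriv F z0‖ ≤ sSup D := le_csSup hDb ⟨F, hFF, rfl⟩
  rw [(hFd z0 hz0).deriv, ← hgder] at hle
  have hvw : v ^ 2 = - w := by
    rw [hv, hk0]; simp [hh, hgz0]
  have hnw : ‖w‖ = ‖v‖ ^ 2 := by
    rw [← norm_pow, hvw, norm_neg]
  have hn : ∀ c : ℂ, ‖c‖ < 1 → ‖1 - conj c * c‖ = 1 - ‖c‖ ^ 2 := by
    intro c hc
    have : (1 - conj c * c) = ((1 - ‖c‖ ^ 2 : ℝ) : ℂ) := by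
      rw [← Complex.normSq_eq_conj_mul_self, Complex.normSq_eq_norm_sq]; push_cast; ring
    rw [this, Complex.norm_real, Real.norm_eq_abs, abs_of_nonneg]
    nlinarith [norm_nonneg c]
  have hv0 : 0 < ‖v‖ := by
    rw [norm_pos_iff]
    intro h1
    apply hhne z0 hz0
    rw [← hk0, ← hv, h1]; simp
  rw [← hv] at hle
  simp only [norm_div, norm_mul, norm_pow, hn v hvn, hn w hw, hgz0, mul_zero, sub_zero, one_pow, div_one,
    RCLike.norm_ofNat, hnw] at hle
  rw [← hgder] at hpos
  have a2 : 0 < 1 - ‖v‖ ^ 2 := by nlinarith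
  have : ‖deriv g z0‖ * (1 - (‖v‖ ^ 2) ^ 2) / (2 * ‖v‖) * (1 - ‖v‖ ^ 2) / (1 - ‖v‖ ^ 2) ^ 2
    = ‖deriv g z0‖ * ((1 + ‖v‖ ^ 2) / (2 * ‖v‖)) := by
    field_simp
    ring
  rw [this] at hle
  have h5 : (1 + ‖v‖ ^ 2) / (2 * ‖v‖) ≤ 1 := by
    by_contra hc
    push Not at hc
    nlinarith
  rw [div_le_one (by positivity)] at h5
  nlinarith [sq_pos_of_pos (sub_pos.2 hvn)]

open Set Filter Metric Complex in
theorem rmt_inverse {U : Set ℂ} (hU : IsOpen U) (hb : Bornology.IsBounded U) (hs : IsSimplyConnected U)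
    (hne : U.Nonempty) :
    ∃ f g : ℂ → ℂ, DifferentiableOn ℂ f U ∧ DifferentiableOn ℂ g (ball 0 1) ∧ MapsTo f U (ball 0 1) ∧
      MapsTo g (ball 0 1) U ∧ (∀ z ∈ U, g (f z) = z) ∧ (∀ z ∈ ball (0:ℂ) 1, f (g z) = z) := by
  obtain ⟨f, hfd, hfi, hfU⟩ := rmt_bounded hU hb hs hne
  have hpc : IsPreconnected U := hs.isPathConnected.isConnected.isPreconnected
  set g := Function.invFunOn f U with hg
  have hgU : ∀ w ∈ ball (0:ℂ) 1, g w ∈ U ∧ f (g w) = w := by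
    intro w hw
    rw [← hfU] at hw
    exact ⟨Function.invFunOn_mem hw, Function.invFunOn_eq hw⟩
  have hfm : MapsTo f U (ball 0 1) := by rw [← hfU]; exact mapsTo_image f U
  have hgf : ∀ z ∈ U, g (f z) = z := fun z hz =>
    hfi (hgU _ (hfm hz)).1 hz (hgU _ (hfm hz)).2
  have hopen : ∀ s ⊆ U, IsOpen s → IsOpen (f '' s) := by
    rcases (hfd.analyticOnNhd hU).is_constant_or_isOpen hpc with ⟨w, hw⟩ | h
    · exfalso
      have h1 := (hgU 0 (by simp)).2
      have h2 := (hgU (1/2) (by norm_num)).2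
      rw [hw _ (hgU 0 (by simp)).1] at h1
      rw [hw _ (hgU (1/2) (by norm_num)).1, h1] at h2
      norm_num at h2
    · exact h
  have hgc : ∀ w ∈ ball (0:ℂ) 1, ContinuousAt g w := by
    intro w hw
    rw [ContinuousAt, tendsto_def]
    intro s hs
    obtain ⟨t, hts, hto, htw⟩ := _root_.mem_nhds_iff.1 hs
    have : f '' (t ∩ U) ∈ 𝓝 w := by
      refine (hopen _ inter_subset_right (hto.inter hU)).mem_nhds ⟨g w, ⟨htw, (hgU w hw).1⟩, (hgU w hw).2⟩
    filter_upwards [this]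
    rintro _ ⟨z, hz, rfl⟩
    rw [mem_preimage, hgf z hz.2]
    exact hts hz.1
  refine ⟨f, g, hfd, ?_, hfm, fun w hw => (hgU w hw).1, hgf, fun w hw => (hgU w hw).2⟩
  have hgood : ∀ w ∈ ball (0:ℂ) 1, deriv f (g w) ≠ 0 → DifferentiableAt ℂ g w := by
    intro w hw h0
    refine (HasDerivAt.of_local_left_inverse (hgc w hw)
      (hfd.differentiableAt (hU.mem_nhds (hgU w hw).1)).hasDerivAt h0 ?_).differentiableAt
    filter_upwards [isOpen_ball.mem_nhds hw] with y hy using (hgU y hy).2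
  intro w hw
  apply DifferentiableAt.differentiableWithinAt
  have han : AnalyticAt ℂ (deriv f) (g w) := (hfd.analyticOnNhd hU _ (hgU w hw).1).deriv
  rcases han.eventually_eq_zero_or_eventually_ne_zero with h | h
  · exfalso
    obtain ⟨r, hr, hrs⟩ := Metric.eventually_nhds_iff_ball.1 (h.and (hU.mem_nhds (hgU w hw).1))
    obtain ⟨y, hy, hyne⟩ : ∃ y ∈ ball (g w) r, y ≠ g w := by
      refine ⟨g w + (r/2 : ℝ), ?_, ?_⟩
      · simp [abs_of_pos hr, hr]
      · simp [hr.ne']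
    have := (convex_ball (g w) r).norm_image_sub_le_of_norm_deriv_le (𝕜 := ℂ) (f := f) (C := 0)
      (fun x hx => hfd.differentiableAt (hU.mem_nhds (hrs x hx).2)) (fun x hx => by rw [(hrs x hx).1]; simp)
      (mem_ball_self hr) hy
    rw [zero_mul, norm_le_zero_iff, sub_eq_zero] at this
    exact hyne (hfi (hrs y hy).2 (hgU w hw).1 this)
  · rw [eventually_nhdsWithin_iff] at h
    have h2 := (hgc w hw).eventually h
    have h3 : {y | (g y ∈ ({g w}ᶜ : Set ℂ) → deriv f (g y) ≠ 0) ∧ y ∈ ball (0:ℂ) 1} ∈ 𝓝 w :=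
      h2.and (isOpen_ball.mem_nhds hw)
    refine ((Complex.differentiableOn_compl_singleton_and_continuousAt_iff h3).1
      ⟨?_, hgc w hw⟩).differentiableAt h3
    rintro y ⟨⟨hy1, hy2⟩, hy3⟩
    refine (hgood y hy2 (hy1 ?_)).differentiableWithinAt
    intro he
    apply hy3
    have : g y = g w := he
    show y = w
    rw [← (hgU y hy2).2, this, (hgU w hw).2]

open Set Filter Metric Complex MeasureTheory in
theorem area_finite {g : ℂ → ℂ} (hg : DifferentiableOn ℂ g (ball 0 1)) (hi : InjOn g (ball 0 1))
    (hb : Bornology.IsBounded (g '' ball 0 1)) :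
    ∫⁻ z in ball (0:ℂ) 1, ENNReal.ofReal (‖deriv g z‖ ^ 2) < ⊤ := by
  have h1 : ∀ z ∈ ball (0:ℂ) 1, HasFDerivWithinAt g (deriv g z • (1 : ℂ →L[ℝ] ℂ)) (ball 0 1) z := fun z hz =>
    ((hg.differentiableAt (isOpen_ball.mem_nhds hz)).hasDerivAt.complexToReal_fderiv).hasFDerivWithinAt
  have h2 := lintegral_abs_det_fderiv_eq_addHaar_image volume measurableSet_ball h1 hi
  have h3 : ∀ a : ℂ, |(a • (1 : ℂ →L[ℝ] ℂ)).det| = ‖a‖ ^ 2 := by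
    intro a
    have : (a • (1 : ℂ →L[ℝ] ℂ)).det = Algebra.norm ℝ a := by
      rw [Algebra.norm_apply]
      rfl
    rw [this, Algebra.norm_complex_apply, Complex.normSq_eq_norm_sq, abs_of_nonneg (by positivity)]
  simp only [h3] at h2
  rw [h2]
  exact hb.measure_lt_top

open Set Filter Metric Complex MeasureTheory in
theorem lintegral_inv_top {δ : ℝ} (hδ : 0 < δ) : ∫⁻ r in Ioo 0 δ, ENNReal.ofReal (r⁻¹) = ⊤ := by
  by_contra h
  have hm : AEStronglyMeasurable (fun r : ℝ => r⁻¹) (volume.restrict (Ioo 0 δ)) :=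
    measurable_inv.aestronglyMeasurable
  have h1 : IntegrableOn (fun r : ℝ => r⁻¹) (Ioo 0 δ) := by
    refine ⟨hm, ?_⟩
    rw [hasFiniteIntegral_iff_ofReal]
    · exact lt_top_iff_ne_top.2 h
    · filter_upwards [ae_restrict_mem measurableSet_Ioo] with r hr
      exact inv_nonneg.2 hr.1.le
  have h2 : IntervalIntegrable (fun r : ℝ => r⁻¹) volume 0 δ := by
    rw [intervalIntegrable_iff_integrableOn_Ioo_of_le hδ.le]; exact h1
  rw [intervalIntegrable_inv_iff] at h2
  rcases h2 with h2 | h2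
  · exact hδ.ne h2
  · simp at h2

open Set Filter Metric Complex MeasureTheory in
/-- the polar length-area selection -/
theorem length_area_sel {F : ℂ → ENNReal} (hF : Measurable F) (hfin : ∫⁻ z, F z < ⊤) {δ : ℝ} (hδ : 0 < δ)
    {c : ℝ} (hc : 0 < c) :
    ∃ r ∈ Ioo 0 δ, ENNReal.ofReal (r ^ 2) * ∫⁻ θ in Ioo (-Real.pi) Real.pi, F (1 - r * exp (θ * I)) ≤ ENNReal.ofReal c := by
  by_contra hcon
  push Not at hcon
  have hF1 : Measurable (fun z : ℂ => F (1 - z)) := hF.comp (by fun_prop)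
  have e1 : ∫⁻ z, F (1 - z) = ∫⁻ z, F z := lintegral_sub_left_eq_self F 1
  rw [← e1, ← Complex.lintegral_comp_polarCoord_symm] at hfin
  have e2 : polarCoord.target = Ioi (0:ℝ) ×ˢ Ioo (-Real.pi) Real.pi := rfl
  rw [e2, Measure.volume_eq_prod, ← Measure.prod_restrict, lintegral_prod _ (by
    apply Measurable.aemeasurable
    simp only [smul_eq_mul]
    refine Measurable.mul (by fun_prop) (hF1.comp ?_)
    have : (fun p : ℝ × ℝ => Complex.polarCoord.symm p) = fun p => (p.1 : ℂ) * (Real.cos p.2 + Real.sin p.2 * I) := by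
      ext p; exact Complex.polarCoord_symm_apply p
    show Measurable (fun p : ℝ × ℝ => Complex.polarCoord.symm p)
    rw [this]
    fun_prop)] at hfin
  refine absurd hfin (not_lt.2 ?_)
  have h3 : ∫⁻ r in Ioo 0 δ, ENNReal.ofReal c * ENNReal.ofReal (r⁻¹) = ⊤ := by
    rw [lintegral_const_mul _ (by fun_prop), lintegral_inv_top hδ, ENNReal.mul_top]
    simpa using hc
  rw [← h3]
  calc _ ≤ ∫⁻ r in Ioo 0 δ, ∫⁻ y in Ioo (-Real.pi) Real.pi, ENNReal.ofReal (r, y).1 • F (1 - Complex.polarCoord.symm (r, y)) := by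
        refine setLIntegral_mono' measurableSet_Ioo ?_
        intro r hr
        have hr0 := hr.1
        have h4 := hcon r hr
        have h5 : ∀ y : ℝ, Complex.polarCoord.symm (r, y) = r * exp (y * I) := by
          intro y
          rw [Complex.polarCoord_symm_apply, Complex.exp_mul_I]; simp
        simp only [smul_eq_mul, h5]
        rw [lintegral_const_mul' _ _ ENNReal.ofReal_ne_top]
        have h6 : ENNReal.ofReal (r ^ 2) = ENNReal.ofReal r * ENNReal.ofReal r := by
          rw [← ENNReal.ofReal_mul hr0.le, sq]
        rw [h6, mul_assoc] at h4
        calc _ ≤ ENNReal.ofReal r * (ENNReal.ofReal r * ∫⁻ θ in Ioo (-Real.pi) Real.pi, F (1 - r * exp (θ * I))) * ENNReal.ofReal (r⁻¹) := by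
              gcongr
          _ = (ENNReal.ofReal r * ENNReal.ofReal r⁻¹) * (ENNReal.ofReal r * ∫⁻ θ in Ioo (-Real.pi) Real.pi, F (1 - r * exp (θ * I))) := by
              ring
          _ = _ := by
              rw [← ENNReal.ofReal_mul hr0.le, mul_inv_cancel₀ hr0.ne']; simp
    _ ≤ _ := lintegral_mono_set Ioo_subset_Ioi_self

theorem one_sub_polar_norm (r θ : ℝ) : ‖(1:ℂ) - r * Complex.exp (θ * Complex.I)‖ ^ 2 = 1 - 2 * r * Real.cos θ + r ^ 2 := by
  rw [← Complex.normSq_eq_norm_sq, Complex.exp_mul_I, ← Complex.ofReal_cos, ← Complex.ofReal_sin]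
  simp [Complex.normSq_apply, -Complex.ofReal_cos, -Complex.ofReal_sin]
  nlinarith [congrArg (fun t => r ^ 2 * t) (Real.sin_sq_add_cos_sq θ)]

open Set Filter Metric Complex MeasureTheory in
theorem length_area_one {g : ℂ → ℂ} (hg : DifferentiableOn ℂ g (ball 0 1)) (hi : InjOn g (ball 0 1))
    (hb : Bornology.IsBounded (g '' ball 0 1)) {δ ε : ℝ} (hδ : 0 < δ) (hε : 0 < ε) :
    ∃ r ∈ Ioo 0 δ, ∀ z ∈ ball (0:ℂ) 1, ∀ z' ∈ ball (0:ℂ) 1, dist z 1 = r → dist z' 1 = r → dist (g z) (g z') ≤ ε := by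
  have hpi := Real.pi_pos
  set c := ε ^ 2 / (2 * Real.pi) with hc
  have hc0 : 0 < c := by positivity
  set F : ℂ → ENNReal := (ball (0:ℂ) 1).indicator (fun z => ENNReal.ofReal (‖deriv g z‖ ^ 2)) with hF
  have hFm : Measurable F := by
    refine Measurable.indicator ?_ measurableSet_ball
    have := measurable_deriv g
    fun_prop
  have hFfin : ∫⁻ z, F z < ⊤ := by
    rw [hF, lintegral_indicator measurableSet_ball]
    exact area_finite hg hi hb
  obtain ⟨r, hr, hrc⟩ := length_area_sel hFm hFfin hδ hc0
  have hr0 := hr.1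
  refine ⟨r, hr, ?_⟩
  -- angles
  have hang : ∀ z ∈ ball (0:ℂ) 1, dist z 1 = r → ∃ θ ∈ Ioo (-Real.pi) Real.pi, z = 1 - r * exp (θ * I) ∧ r / 2 < Real.cos θ := by
    intro z hz hzr
    set θ := Complex.arg (1 - z)
    have h1 : ‖1 - z‖ = r := by rw [← hzr, dist_eq_norm, norm_sub_rev]
    have h2 : z = 1 - r * exp (θ * I) := by
      rw [← h1, Complex.norm_mul_exp_arg_mul_I]; ring
    have h3 : r / 2 < Real.cos θ := by
      have h4 := one_sub_polar_norm r θ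
      rw [← h2] at h4
      have : ‖z‖ < 1 := by simpa using hz
      have : ‖z‖ ^ 2 < 1 := by nlinarith [norm_nonneg z]
      nlinarith
    refine ⟨θ, ⟨Complex.neg_pi_lt_arg _, lt_of_le_of_ne (Complex.arg_le_pi _) ?_⟩, h2, h3⟩
    intro h
    rw [h, Real.cos_pi] at h3
    linarith
  have key : ∀ a ∈ Ioo (-Real.pi) Real.pi, ∀ b ∈ Ioo (-Real.pi) Real.pi, r / 2 < Real.cos a → r / 2 < Real.cos b → a ≤ b →
      dist (g (1 - r * exp (a * I))) (g (1 - r * exp (b * I))) ≤ ε := by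
    intro a ha b hb hca hcb hab
    have hin : ∀ θ ∈ Icc a b, (1 - r * exp (θ * I) : ℂ) ∈ ball (0:ℂ) 1 := by
      intro θ hθ
      have h1 : r / 2 < Real.cos θ := by
        by_cases h0 : 0 ≤ θ
        · exact lt_of_lt_of_le hcb (Real.cos_le_cos_of_nonneg_of_le_pi h0 hb.2.le hθ.2)
        · push Not at h0
          rw [← Real.cos_neg θ]
          rw [← Real.cos_neg a] at hca
          exact lt_of_lt_of_le hca (Real.cos_le_cos_of_nonneg_of_le_pi (by linarith) (by linarith [ha.1]) (by linarith [hθ.1]))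
      rw [mem_ball_zero_iff]
      have h4 := one_sub_polar_norm r θ
      by_contra hcc
      push Not at hcc
      nlinarith
    set γ : ℝ → ℂ := fun θ => 1 - r * exp (θ * I) with hγ
    have hγd : ∀ θ : ℝ, HasDerivAt γ (-(r * (exp (θ * I) * I))) θ := by
      intro θ
      have h1 : HasDerivAt (fun θ : ℝ => (θ : ℂ) * I) (1 * I) θ := (Complex.ofRealCLM.hasDerivAt).mul_const I
      have h2 := ((h1.cexp).const_mul (r:ℂ)).const_sub 1
      simpa using h2
    have hγn : ∀ θ : ℝ, ‖-((r:ℂ) * (exp (θ * I) * I))‖ = r := by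
      intro θ
      simp [Complex.norm_exp_ofReal_mul_I, abs_of_pos hr0]
    have hGd : ∀ θ ∈ Icc a b, HasDerivAt (fun θ => g (γ θ)) (deriv g (γ θ) * (-(r * (exp (θ * I) * I)))) θ := by
      intro θ hθ
      exact HasDerivAt.comp_of_eq θ (hg.differentiableAt (isOpen_ball.mem_nhds (hin θ hθ))).hasDerivAt (hγd θ) rfl
    have hdc : ContinuousOn (fun θ => deriv g (γ θ)) (Icc a b) := by
      have h1 : ContinuousOn (deriv g) (ball 0 1) := (hg.deriv isOpen_ball).continuousOn
      refine h1.comp (Continuous.continuousOn ?_) hin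
      fun_prop
    have hcont : ContinuousOn (fun θ : ℝ => deriv g (γ θ) * (-(r * (exp (θ * I) * I)))) (Icc a b) := by
      refine hdc.mul (Continuous.continuousOn ?_)
      fun_prop
    have hftc : ∫ θ in a..b, deriv g (γ θ) * (-(r * (exp (θ * I) * I))) = g (γ b) - g (γ a) := by
      refine intervalIntegral.integral_eq_sub_of_hasDerivAt (f := fun θ => g (γ θ)) ?_ ?_
      · intro θ hθ
        rw [uIcc_of_le hab] at hθ
        exact hGd θ hθ
      · refine ContinuousOn.intervalIntegrable ?_
        rwa [uIcc_of_le hab]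
    set L := ∫ θ in a..b, ‖deriv g (γ θ)‖ ^ 2 with hL
    have hLint : IntervalIntegrable (fun θ => ‖deriv g (γ θ)‖ ^ 2) volume a b := by
      refine ContinuousOn.intervalIntegrable ?_
      rw [uIcc_of_le hab]
      exact hdc.norm.pow 2
    have hLc : r ^ 2 * L ≤ c := by
      have h1 : ENNReal.ofReal L ≤ ∫⁻ θ in Ioo (-Real.pi) Real.pi, F (1 - r * exp (θ * I)) := by
        rw [hL, intervalIntegral.integral_of_le hab, ofReal_integral_eq_lintegral_ofReal
          ((intervalIntegrable_iff_integrableOn_Ioc_of_le hab).1 hLint) (Eventually.of_forall fun _ => by positivity)]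
        calc _ = ∫⁻ θ in Ioc a b, F (1 - r * exp (θ * I)) := by
              refine setLIntegral_congr_fun measurableSet_Ioc ?_
              intro θ hθ
              simp only [hF]
              rw [indicator_of_mem (hin θ (Ioc_subset_Icc_self hθ))]
          _ ≤ _ := by
              refine lintegral_mono_set ?_
              intro θ hθ
              exact ⟨ha.1.trans hθ.1, hθ.2.trans_lt hb.2⟩
      have h2 : ENNReal.ofReal (r ^ 2 * L) ≤ ENNReal.ofReal c := by
        rw [ENNReal.ofReal_mul (by positivity)]
        refine le_trans ?_ hrc
        gcongr
      exact (ENNReal.ofReal_le_ofReal_iff hc0.le).1 h2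
    rw [dist_comm, dist_eq_norm, ← hftc]
    set s := 2 * Real.pi / ε with hs
    have hs0 : 0 < s := by positivity
    calc _ ≤ ∫ θ in a..b, (s * r ^ 2 * ‖deriv g (γ θ)‖ ^ 2 + 1 / s) / 2 := by
          refine intervalIntegral.norm_integral_le_of_norm_le hab ?_ ?_
          · refine Eventually.of_forall fun θ _ => ?_
            rw [norm_mul, hγn]
            have : 0 ≤ (s * (r * ‖deriv g (γ θ)‖) - 1) ^ 2 / s := by positivity
            have h2 : (s * (r * ‖deriv g (γ θ)‖) - 1) ^ 2 / s = s * r ^ 2 * ‖deriv g (γ θ)‖ ^ 2 + 1 / s - 2 * (‖deriv g (γ θ)‖ * r) := by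
              field_simp; ring
            linarith
          · exact ((hLint.const_mul _).add intervalIntegrable_const).div_const 2
      _ = (s * r ^ 2 * L + (b - a) * (1 / s)) / 2 := by
          rw [intervalIntegral.integral_div, intervalIntegral.integral_add (hLint.const_mul _) intervalIntegrable_const,
            intervalIntegral.integral_const_mul, intervalIntegral.integral_const, smul_eq_mul]
      _ ≤ (s * c + 2 * Real.pi * (1 / s)) / 2 := by
          have : b - a ≤ 2 * Real.pi := by linarith [ha.1, hb.2]
          have h2 : s * r ^ 2 * L ≤ s * c := by rw [mul_assoc]; gcongr
          gcongr
      _ = ε := by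
          rw [hs, hc]; field_simp; ring
  intro z hz z' hz' hzr hzr'
  obtain ⟨a, ha, rfl, hca⟩ := hang z hz hzr
  obtain ⟨b, hb, rfl, hcb⟩ := hang z' hz' hzr'
  rcases le_total a b with h | h
  · exact key a ha b hb hca hcb h
  · rw [dist_comm]; exact key b hb a ha hcb hca h

open Set Filter Metric Complex in
theorem length_area {g : ℂ → ℂ} (hg : DifferentiableOn ℂ g (ball 0 1)) (hi : InjOn g (ball 0 1))
    (hb : Bornology.IsBounded (g '' ball 0 1)) {ζ : ℂ} (hζ : ‖ζ‖ = 1) {δ ε : ℝ} (hδ : 0 < δ) (hε : 0 < ε) :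
    ∃ r ∈ Ioo 0 δ, ∀ z ∈ ball (0:ℂ) 1, ∀ z' ∈ ball (0:ℂ) 1, dist z ζ = r → dist z' ζ = r → dist (g z) (g z') ≤ ε := by
  have hζ0 : ζ ≠ 0 := by intro h; simp [h] at hζ
  have hm : MapsTo (fun z => ζ * z) (ball 0 1) (ball 0 1) := by
    intro z hz
    simpa [hζ] using hz
  obtain ⟨r, hr, h⟩ := length_area_one (g := fun z => g (ζ * z))
    (hg.comp (by fun_prop) hm) (fun x hx y hy hxy => mul_left_cancel₀ hζ0 (hi (hm hx) (hm hy) hxy))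
    (hb.subset (by rintro _ ⟨z, hz, rfl⟩; exact ⟨_, hm hz, rfl⟩)) hδ hε
  refine ⟨r, hr, ?_⟩
  have e : ∀ z, dist (ζ⁻¹ * z) 1 = dist z ζ := by
    intro z
    rw [dist_eq_norm, dist_eq_norm]
    have : z - ζ = ζ * (ζ⁻¹ * z - 1) := by field_simp
    rw [this, norm_mul, hζ, one_mul]
  intro z hz z' hz' h1 h2
  have := h (ζ⁻¹ * z) (by simpa [hζ] using hz) (ζ⁻¹ * z') (by simpa [hζ] using hz') (by rw [e, h1]) (by rw [e, h2])
  simpa [mul_inv_cancel_left₀ hζ0] using this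

open Set Filter Metric Complex ComplexConjugate in
theorem carat_cap {h k : ℂ → ℂ} (hk : ContinuousOn k (ball 0 1))
    (hkm : MapsTo k (ball 0 1) (ball 0 1)) (hhm : MapsTo h (ball 0 1) (ball 0 1))
    (hkh : ∀ z ∈ ball (0:ℂ) 1, k (h z) = z) (hhk : ∀ z ∈ ball (0:ℂ) 1, h (k z) = z)
    {ζ : ℂ} (hζ : ‖ζ‖ = 1)
    (hla : ∀ δ > 0, ∀ ε > 0, ∃ r ∈ Ioo (0:ℝ) δ, ∀ z ∈ ball (0:ℂ) 1, ∀ z' ∈ ball (0:ℂ) 1,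
      dist z ζ = r → dist z' ζ = r → dist (h z) (h z') ≤ ε)
    {s : ℝ} (hs : 0 < s) (hs1 : s < 1) :
    ∃ r > 0, (∃ v, ∀ z ∈ ball (0:ℂ) 1, dist z ζ < r → ‖h z - v‖ ^ 2 ≤ 2 * s) ∧
      ∀ z ∈ ball (0:ℂ) 1, dist z ζ < r → 1 - s < ‖h z‖ := by
  have hKs : closedBall (0:ℂ) (1 - s/2) ⊆ ball 0 1 := closedBall_subset_ball (by linarith)
  have hK : IsCompact (k '' closedBall (0:ℂ) (1 - s/2)) := (isCompact_closedBall _ _).image_of_continuousOn (hk.mono hKs)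
  have hζK : ζ ∉ k '' closedBall (0:ℂ) (1 - s/2) := by
    rintro ⟨w, hw, rfl⟩
    have := hkm (hKs hw)
    rw [mem_ball_zero_iff] at this
    linarith
  obtain ⟨δ0, hδ0, hδK⟩ := Metric.isOpen_iff.1 hK.isClosed.isOpen_compl ζ hζK
  have hnear : ∀ z ∈ ball (0:ℂ) 1, dist z ζ < δ0 → 1 - s/2 < ‖h z‖ := by
    intro z hz hd
    by_contra hc
    push Not at hc
    exact hδK hd ⟨h z, by simpa using hc, hkh z hz⟩
  obtain ⟨r, hr, hrl⟩ := hla (min δ0 1) (by positivity) (s/4) (by positivity)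
  have hrδ : r < δ0 := lt_of_lt_of_le hr.2 (min_le_left _ _)
  have hr1 : r < 1 := lt_of_lt_of_le hr.2 (min_le_right _ _)
  have hr0 := hr.1
  refine ⟨r, hr0, ?_, fun z hz hd => by linarith [hnear z hz (hd.trans hrδ)]⟩
  set z0 : ℂ := ((1 - r : ℝ) : ℂ) * ζ with hz0
  have hz0b : z0 ∈ ball (0:ℂ) 1 := by
    rw [mem_ball_zero_iff, hz0, norm_mul, hζ, Complex.norm_real, Real.norm_eq_abs, abs_of_pos (by linarith)]; linarith
  have hz0r : dist z0 ζ = r := by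
    rw [dist_eq_norm, hz0]
    have : ((1 - r : ℝ) : ℂ) * ζ - ζ = ((-r : ℝ) : ℂ) * ζ := by push_cast; ring
    rw [this, norm_mul, hζ, Complex.norm_real]; simp [abs_of_pos hr0]
  set y := h z0 with hy
  have hyn : 1 - s/2 < ‖y‖ := hnear z0 hz0b (by rw [hz0r]; exact hrδ)
  have hy0 : 0 < ‖y‖ := by linarith
  set v : ℂ := y / ‖y‖ with hv
  have hv1 : ‖v‖ = 1 := by rw [hv, norm_div, Complex.norm_real, norm_norm, div_self hy0.ne']
  have hyv : (y * conj v).re = ‖y‖ := by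
    have : y * conj v = (‖y‖ : ℂ) := by
      rw [hv, map_div₀, Complex.conj_ofReal, mul_div_assoc', Complex.mul_conj, Complex.normSq_eq_norm_sq]
      have : (‖y‖ : ℂ) ≠ 0 := by exact_mod_cast hy0.ne'
      push_cast
      field_simp
    rw [this, Complex.ofReal_re]
  refine ⟨v, ?_⟩
  have hγ : ∀ z ∈ ball (0:ℂ) 1, dist z ζ = r → 1 - s < (h z * conj v).re := by
    intro z hz hzr
    have h1 := hrl z hz z0 hz0b hzr hz0r
    have h2 : h z * conj v = y * conj v + (h z - y) * conj v := by ring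
    have h3 : |((h z - y) * conj v).re| ≤ s / 4 := by
      refine (Complex.abs_re_le_norm _).trans ?_
      rw [norm_mul, RCLike.norm_conj, hv1, mul_one, ← dist_eq_norm]
      exact h1
    rw [h2, Complex.add_re, hyv]
    have := (abs_le.1 h3).1
    linarith
  set E : Set ℂ := ball 0 1 ∩ {w | (w * conj v).re ≤ 1 - s} with hE
  have hEc : IsPreconnected E := by
    refine ((convex_ball 0 1).inter ?_).isPreconnected
    refine convex_halfSpace_le (𝕜 := ℝ) (f := fun w : ℂ => (w * conj v).re) ⟨?_, ?_⟩ (1 - s)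
    · intro a b; simp [add_mul]
    · intro c a; simp; ring
  have hkE : IsPreconnected (k '' E) := hEc.image k (hk.mono inter_subset_left)
  have hdisj : Disjoint (ball ζ r) (closedBall ζ r)ᶜ :=
    disjoint_compl_right_iff_subset.2 ball_subset_closedBall
  have hsub : k '' E ⊆ ball ζ r ∪ (closedBall ζ r)ᶜ := by
    rintro _ ⟨w, hw, rfl⟩
    rcases lt_trichotomy (dist (k w) ζ) r with h1 | h1 | h1
    · exact Or.inl h1
    · have := hγ (k w) (hkm hw.1) h1
      rw [hhk w hw.1] at this
      exact absurd hw.2 (not_le.2 this)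
    · right
      simpa using h1
  have h0E : (0:ℂ) ∈ E := ⟨by simp, by simp; linarith⟩
  have hkE2 : k '' E ⊆ (closedBall ζ r)ᶜ := by
    rcases IsPreconnected.subset_or_subset isOpen_ball isClosed_closedBall.isOpen_compl hdisj hsub hkE with h1 | h1
    · have h2 := h1 ⟨0, h0E, rfl⟩
      have h3 := hnear (k 0) (hkm (by simp)) (lt_trans h2 hrδ)
      rw [hhk 0 (by simp), norm_zero] at h3
      linarith
    · exact h1
  intro z hz hzr
  have h1 : h z ∉ E := by
    intro h1
    have := hkE2 ⟨h z, h1, rfl⟩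
    rw [hkh z hz] at this
    exact this (mem_closedBall.2 hzr.le)
  have h2 : 1 - s < (h z * conj v).re := by
    by_contra hc
    exact h1 ⟨hhm hz, not_lt.1 hc⟩
  have h3 : ‖h z‖ ^ 2 < 1 := by
    have := mem_ball_zero_iff.1 (hhm hz)
    nlinarith [norm_nonneg (h z)]
  have h4 : ‖v‖ ^ 2 = 1 := by rw [hv1]; norm_num
  have h5 : ‖h z - v‖ ^ 2 = ‖h z‖ ^ 2 - 2 * (h z * conj v).re + ‖v‖ ^ 2 := by
    rw [← Complex.normSq_eq_norm_sq, ← Complex.normSq_eq_norm_sq, ← Complex.normSq_eq_norm_sq, Complex.normSq_sub]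
    ring
  rw [h5, h4]
  linarith

open Set Filter Metric Complex in
theorem carat_limit {h k : ℂ → ℂ} (hk : ContinuousOn k (ball 0 1))
    (hkm : MapsTo k (ball 0 1) (ball 0 1)) (hhm : MapsTo h (ball 0 1) (ball 0 1))
    (hkh : ∀ z ∈ ball (0:ℂ) 1, k (h z) = z) (hhk : ∀ z ∈ ball (0:ℂ) 1, h (k z) = z)
    {ζ : ℂ} (hζ : ‖ζ‖ = 1)
    (hla : ∀ δ > 0, ∀ ε > 0, ∃ r ∈ Ioo (0:ℝ) δ, ∀ z ∈ ball (0:ℂ) 1, ∀ z' ∈ ball (0:ℂ) 1,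
      dist z ζ = r → dist z' ζ = r → dist (h z) (h z') ≤ ε) :
    ∃ y, ‖y‖ = 1 ∧ Tendsto h (𝓝[ball 0 1] ζ) (𝓝 y) := by
  have hcl : ζ ∈ closure (ball (0:ℂ) 1) := by
    rw [closure_ball _ one_ne_zero]; simp [hζ]
  haveI : NeBot (𝓝[ball 0 1] ζ) := mem_closure_iff_nhdsWithin_neBot.1 hcl
  have hmem : ∀ r > 0, ∀ᶠ z in 𝓝[ball 0 1] ζ, z ∈ ball (0:ℂ) 1 ∧ dist z ζ < r := by
    intro r hr
    filter_upwards [self_mem_nhdsWithin, mem_nhdsWithin_of_mem_nhds (ball_mem_nhds ζ hr)] with z h1 h2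
    exact ⟨h1, h2⟩
  have hc : Cauchy (map h (𝓝[ball 0 1] ζ)) := by
    rw [Metric.cauchy_iff]
    refine ⟨inferInstance, ?_⟩
    intro ε hε
    set s := min (ε ^ 2 / 32) (1/2) with hs
    have hs0 : 0 < s := by positivity
    obtain ⟨r, hr, ⟨v, hv⟩, _⟩ := carat_cap hk hkm hhm hkh hhk hζ hla hs0 (lt_of_le_of_lt (min_le_right _ _) (by norm_num))
    have hle : ∀ z ∈ ball (0:ℂ) 1, dist z ζ < r → ‖h z - v‖ ≤ ε / 4 := by
      intro z hz hd
      have h1 := hv z hz hd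
      have h2 : s ≤ ε ^ 2 / 32 := min_le_left _ _
      refine le_of_sq_le_sq ?_ (by positivity)
      nlinarith
    refine ⟨h '' {z | z ∈ ball (0:ℂ) 1 ∧ dist z ζ < r}, image_mem_map (hmem r hr), ?_⟩
    rintro _ ⟨a, ha, rfl⟩ _ ⟨b, hb, rfl⟩
    have h1 := hle a ha.1 ha.2
    have h2 := hle b hb.1 hb.2
    have : dist (h a) (h b) ≤ dist (h a) v + dist (h b) v := dist_triangle_right _ _ _
    rw [dist_eq_norm (h a) v, dist_eq_norm (h b) v] at this
    linarith
  obtain ⟨y, hy⟩ := CompleteSpace.complete hc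
  refine ⟨y, ?_, hy⟩
  have ht : Tendsto h (𝓝[ball 0 1] ζ) (𝓝 y) := hy
  apply le_antisymm
  · refine le_of_tendsto ht.norm ?_
    filter_upwards [self_mem_nhdsWithin] with z hz
    exact (mem_ball_zero_iff.1 (hhm hz)).le
  · by_contra hlt
    push Not at hlt
    set s := (1 - ‖y‖) / 2
    have hs0 : 0 < s := by simp only [s]; linarith
    have hs1 : s < 1 := by simp only [s]; linarith [norm_nonneg y]
    obtain ⟨r, hr, _, h2⟩ := carat_cap hk hkm hhm hkh hhk hζ hla hs0 hs1
    have : 1 - s ≤ ‖y‖ := by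
      refine ge_of_tendsto ht.norm ?_
      filter_upwards [hmem r hr] with z hz
      exact (h2 z hz.1 hz.2).le
    simp only [s] at this
    linarith

open Set Filter Metric Complex in
theorem circle_arc {S : Set ℂ} (hS : IsPreconnected S) (hsub : S ⊆ sphere 0 1) {z1 z2 : ℂ} (h1 : z1 ∈ S) (h2 : z2 ∈ S)
    (hne : z1 ≠ z2) : ∃ O : Set ℂ, IsOpen O ∧ (O ∩ sphere 0 1).Nonempty ∧ O ∩ sphere 0 1 ⊆ S := by
  by_cases hall : sphere (0:ℂ) 1 ⊆ S
  · exact ⟨univ, isOpen_univ, ⟨1, by simp⟩, inter_subset_right.trans hall⟩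
  obtain ⟨p, hp, hpS⟩ := not_subset.1 hall
  have hp1 : ‖p‖ = 1 := by simpa using hp
  have hp0 : p ≠ 0 := by intro h; simp [h] at hp1
  set T : ℂ → ℂ := fun z => - z / p with hT
  have hTc : Continuous T := by fun_prop
  have hTn : ∀ z, ‖T z‖ = ‖z‖ := by intro z; simp [hT, hp1]
  have hslit : ∀ z ∈ sphere (0:ℂ) 1, z ≠ p → T z ∈ slitPlane := by
    intro z hz hzp
    rw [mem_slitPlane_iff_arg]
    have hz1 : ‖T z‖ = 1 := by rw [hTn]; simpa using hz
    refine ⟨?_, by intro h; simp [h] at hz1⟩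
    intro harg
    have := Complex.norm_mul_exp_arg_mul_I (T z)
    rw [harg, hz1, Complex.exp_pi_mul_I] at this
    apply hzp
    have h3 : - z / p = -1 := by simpa using this.symm
    rw [div_eq_iff hp0] at h3
    linear_combination -h3
  have hSc : ContinuousOn (fun z => arg (T z)) S := by
    intro z hz
    refine ContinuousAt.continuousWithinAt ?_
    refine ContinuousAt.comp (f := T) (g := arg) (continuousAt_arg (hslit z (hsub hz) (by rintro rfl; exact hpS hz))) hTc.continuousAt
  have himg := hS.image _ hSc
  have hinj : ∀ z ∈ sphere (0:ℂ) 1, ∀ z' ∈ sphere (0:ℂ) 1, arg (T z) = arg (T z') → z = z' := by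
    intro z hz z' hz' ha
    have : T z = T z' := by
      apply Complex.ext_norm_arg _ ha
      rw [hTn, hTn]; simp at hz hz'; rw [hz, hz']
    simp only [hT] at this
    rw [div_left_inj' hp0] at this
    exact neg_injective this
  wlog hlt : arg (T z1) < arg (T z2) generalizing z1 z2
  · refine this h2 h1 hne.symm ?_
    refine lt_of_le_of_ne (not_lt.1 hlt) ?_
    intro he
    exact hne (hinj _ (hsub h1) _ (hsub h2) he.symm)
  have hIcc : Icc (arg (T z1)) (arg (T z2)) ⊆ (fun z => arg (T z)) '' S :=
    himg.Icc_subset ⟨z1, h1, rfl⟩ ⟨z2, h2, rfl⟩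
  refine ⟨T ⁻¹' (slitPlane ∩ arg ⁻¹' Ioo (arg (T z1)) (arg (T z2))), ?_, ?_, ?_⟩
  · refine IsOpen.preimage hTc ?_
    refine ContinuousOn.isOpen_inter_preimage ?_ isOpen_slitPlane isOpen_Ioo
    exact fun z hz => (continuousAt_arg hz).continuousWithinAt
  · obtain ⟨θ, hθ⟩ := exists_between hlt
    obtain ⟨z, hz, hzθ⟩ := hIcc ⟨hθ.1.le, hθ.2.le⟩
    refine ⟨z, ⟨hslit z (hsub hz) (by rintro rfl; exact hpS hz), ?_⟩, hsub hz⟩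
    show arg (T z) ∈ Ioo _ _
    rw [show arg (T z) = θ from hzθ]; exact hθ
  · rintro z ⟨⟨_, hz2⟩, hz3⟩
    obtain ⟨z', hz', he⟩ := hIcc (Ioo_subset_Icc_self hz2)
    rw [← hinj z' (hsub hz') z hz3 he]
    exact hz'

open Set Filter Metric Complex in
/-- boundary uniqueness: a function holomorphic in the disc, continuous up to the boundary, vanishing on an arc,
vanishes at the centre. -/
theorem arc_vanish {Φ : ℂ → ℂ} (hd : DifferentiableOn ℂ Φ (ball 0 1)) (hc : ContinuousOn Φ (closedBall 0 1))
    {O : Set ℂ} (hO : IsOpen O) (hne : (O ∩ sphere 0 1).Nonempty) (hz' : ∀ z ∈ O ∩ sphere 0 1, Φ z = 0) : Φ 0 = 0 := by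
  obtain ⟨o, ho, ho1⟩ := hne
  have ho1' : ‖o‖ = 1 := by simpa using ho1
  obtain ⟨t, ht⟩ := (isCompact_sphere (0:ℂ) 1).elim_finite_subcover
    (fun u : sphere (0:ℂ) 1 => (fun z => (u:ℂ) * z) ⁻¹' O) (fun u => hO.preimage (by fun_prop)) (by
      intro z hz
      have hz1 : ‖z‖ = 1 := by simpa using hz
      have hz0 : z ≠ 0 := by intro h; simp [h] at hz1
      refine mem_iUnion.2 ⟨⟨o / z, by simp [ho1', hz1]⟩, ?_⟩
      simpa [div_mul_cancel₀ _ hz0] using ho)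
  set G : ℂ → ℂ := fun z => ∏ u ∈ t, Φ (u * z) with hG
  have hu1 : ∀ u : sphere (0:ℂ) 1, ‖(u:ℂ)‖ = 1 := fun u => by simpa using u.2
  have hGd : DiffContOnCl ℂ G (ball 0 1) := by
    refine ⟨?_, ?_⟩
    · refine DifferentiableOn.fun_finsetProd ?_
      intro u _
      refine hd.comp (by fun_prop) ?_
      intro z hz
      simpa [hu1] using hz
    · rw [closure_ball _ one_ne_zero]
      refine continuousOn_finsetProd _ ?_
      intro u _
      refine hc.comp (by fun_prop) ?_
      intro z hz
      simpa [hu1] using hz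
  have := Complex.norm_le_of_forall_mem_frontier_norm_le (isBounded_ball (x := (0:ℂ)) (r := 1)) hGd (C := 0) ?_
    (z := 0) (subset_closure (by simp))
  · rw [norm_le_zero_iff] at this
    simp only [hG, mul_zero, Finset.prod_eq_zero_iff] at this
    exact this.choose_spec.2
  · intro z hz
    rw [frontier_ball _ one_ne_zero] at hz
    obtain ⟨u, hu, huO⟩ := mem_iUnion₂.1 (ht hz)
    rw [norm_le_zero_iff]
    refine Finset.prod_eq_zero hu (hz' _ ⟨huO, ?_⟩)
    have : ‖z‖ = 1 := by simpa using hz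
    simp [hu1, this]

open Set Filter Metric Complex in
theorem carat_fibre {h k H : ℂ → ℂ} (hk : ContinuousOn k (ball 0 1))
    (hkm : MapsTo k (ball 0 1) (ball 0 1)) (hhm : MapsTo h (ball 0 1) (ball 0 1))
    (hkh : ∀ z ∈ ball (0:ℂ) 1, k (h z) = z) (hhk : ∀ z ∈ ball (0:ℂ) 1, h (k z) = z)
    (hH : ContinuousOn H (closedBall 0 1)) (hHh : ∀ z ∈ ball (0:ℂ) 1, H z = h z) {q : ℂ} (hq : ‖q‖ = 1) :
    IsPreconnected (sphere (0:ℂ) 1 ∩ {z | H z = q}) := by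
  set S := sphere (0:ℂ) 1 ∩ {z | H z = q} with hS
  have hScl : IsClosed S := by
    have : S = sphere (0:ℂ) 1 ∩ H ⁻¹' {q} := rfl
    rw [this]
    exact (hH.mono sphere_subset_closedBall).preimage_isClosed_of_isClosed isClosed_sphere isClosed_singleton
  have hSc : IsCompact S := (isCompact_sphere (0:ℂ) 1).of_isClosed_subset hScl inter_subset_left
  rw [isPreconnected_closed_iff]
  intro t t' ht ht' hsub hne hne'
  by_contra hcon
  rw [not_nonempty_iff_eq_empty] at hcon
  have hd : Disjoint (S ∩ t) (S ∩ t') := by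
    rw [disjoint_iff_inter_eq_empty, ← hcon]; ext x; simp; tauto
  obtain ⟨u, v, hu, hv, hSu, hSv, huv⟩ := SeparatedNhds.of_isCompact_isCompact (hSc.inter_right ht) (hSc.inter_right ht') hd
  have hSuv : S ⊆ u ∪ v := by
    intro x hx
    rcases hsub hx with h1 | h1
    · exact Or.inl (hSu ⟨hx, h1⟩)
    · exact Or.inr (hSv ⟨hx, h1⟩)
  -- epsilon
  obtain ⟨ε, hε, hεs⟩ : ∃ ε > 0, ∀ z ∈ ball (0:ℂ) 1, dist (h z) q < ε → z ∈ u ∪ v := by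
    have hC : IsCompact (closedBall (0:ℂ) 1 \ (u ∪ v)) := (isCompact_closedBall _ _).diff (hu.union hv)
    have hHC : IsCompact (H '' (closedBall (0:ℂ) 1 \ (u ∪ v))) := hC.image_of_continuousOn (hH.mono sdiff_subset)
    have hqn : q ∉ H '' (closedBall (0:ℂ) 1 \ (u ∪ v)) := by
      rintro ⟨z, ⟨hz1, hz2⟩, hzq⟩
      apply hz2
      apply hSuv
      refine ⟨?_, hzq⟩
      by_contra hzs
      have hzb : z ∈ ball (0:ℂ) 1 := by
        rw [mem_ball]
        exact lt_of_le_of_ne hz1 hzs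
      rw [hHh z hzb] at hzq
      have := mem_ball_zero_iff.1 (hhm hzb)
      rw [hzq] at this
      linarith
    obtain ⟨ε, hε, hs⟩ := Metric.isOpen_iff.1 hHC.isClosed.isOpen_compl q hqn
    refine ⟨ε, hε, ?_⟩
    intro z hz hd
    by_contra hc
    exact hs hd ⟨z, ⟨ball_subset_closedBall hz, hc⟩, hHh z hz⟩
  set W := k '' (ball 0 1 ∩ ball q ε) with hW
  have hWc : IsPreconnected W :=
    (((convex_ball 0 1).inter (convex_ball q ε)).isPreconnected).image k (hk.mono inter_subset_left)
  have hWs : W ⊆ u ∪ v := by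
    rintro _ ⟨w, hw, rfl⟩
    refine hεs (k w) (hkm hw.1) ?_
    rw [hhk w hw.1]; exact hw.2
  have hacc : ∀ x ∈ S, ∀ o : Set ℂ, IsOpen o → x ∈ o → (W ∩ o).Nonempty := by
    intro x hx o ho hxo
    have hxc : x ∈ closedBall (0:ℂ) 1 := sphere_subset_closedBall hx.1
    have hcl : x ∈ closure (ball (0:ℂ) 1) := by rwa [closure_ball _ one_ne_zero]
    have hnb : NeBot (𝓝[ball 0 1] x) := mem_closure_iff_nhdsWithin_neBot.1 hcl
    have h1 : Tendsto H (𝓝[ball 0 1] x) (𝓝 q) := by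
      have := (hH x hxc).mono ball_subset_closedBall
      rw [ContinuousWithinAt, hx.2] at this
      exact this
    have h2 := h1.eventually (ball_mem_nhds q hε)
    obtain ⟨z, hz1, hz2, hz3⟩ := (h2.and ((eventually_mem_nhdsWithin).and
      (mem_nhdsWithin_of_mem_nhds (ho.mem_nhds hxo)))).exists
    rw [hHh z hz2] at hz1
    exact ⟨z, ⟨h z, ⟨hhm hz2, hz1⟩, hkh z hz2⟩, hz3⟩
  obtain ⟨x, hx, hxt⟩ := hne
  obtain ⟨x', hx', hxt'⟩ := hne'
  obtain ⟨a, haW, hau⟩ := hacc x hx u hu (hSu ⟨hx, hxt⟩)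
  obtain ⟨b, hbW, hbv⟩ := hacc x' hx' v hv (hSv ⟨hx', hxt'⟩)
  rcases IsPreconnected.subset_or_subset hu hv huv hWs hWc with h1 | h1
  · exact (disjoint_left.1 huv (h1 hbW)) hbv
  · exact (disjoint_left.1 huv hau) (h1 haW)

open Set Filter Metric Complex in
theorem carat_radial {H : ℂ → ℂ} (hH : ContinuousOn H (closedBall 0 1)) (hi : InjOn H (closedBall 0 1))
    (hs : closedBall 0 1 ⊆ H '' closedBall 0 1)
    (h1 : ∀ z, ‖z‖ < 1 → ‖H z‖ < 1) (h2 : ∀ z, ‖z‖ = 1 → ‖H z‖ = 1) :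
    ∃ m : ℂ ≃ₜ ℂ, (∀ z, ‖z‖ ≤ 1 → m z = H z) ∧ (∀ z, ‖m z‖ < 1 ↔ ‖z‖ < 1) ∧ (∀ z, ‖m z‖ ≤ 1 ↔ ‖z‖ ≤ 1) := by
  set M : ℂ → ℂ := fun z => ((max 1 ‖z‖ : ℝ) : ℂ) * H (z / (max 1 ‖z‖ : ℝ)) with hM
  have hM1 : ∀ z, ‖z‖ ≤ 1 → M z = H z := by
    intro z hz
    simp [hM, max_eq_left hz]
  have hM2 : ∀ z, 1 ≤ ‖z‖ → M z = (‖z‖ : ℂ) * H (z / ‖z‖) := by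
    intro z hz
    simp only [hM, max_eq_right hz]
  have hn : ∀ z : ℂ, 1 ≤ ‖z‖ → ‖z / (‖z‖ : ℂ)‖ = 1 := by
    intro z hz
    rw [norm_div, Complex.norm_real, norm_norm, div_self (by linarith)]
  have hM3 : ∀ z, 1 ≤ ‖z‖ → ‖M z‖ = ‖z‖ := by
    intro z hz
    rw [hM2 z hz, norm_mul, Complex.norm_real, norm_norm, h2 _ (hn z hz), mul_one]
  have hlt : ∀ z, ‖M z‖ < 1 ↔ ‖z‖ < 1 := by
    intro z
    constructor
    · intro h
      by_contra hc
      push Not at hc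
      rw [hM3 z hc] at h
      linarith
    · intro h
      rw [hM1 z h.le]; exact h1 z h
  have hle : ∀ z, ‖M z‖ ≤ 1 ↔ ‖z‖ ≤ 1 := by
    intro z
    constructor
    · intro h
      by_contra hc
      push Not at hc
      rw [hM3 z hc.le] at h
      linarith
    · intro h
      rcases h.lt_or_eq with h | h
      · exact ((hlt z).2 h).le
      · rw [hM3 z h.ge, h]
  have hMc : Continuous M := by
    refine Continuous.mul (by fun_prop) ?_
    refine hH.comp_continuous ?_ ?_
    · refine Continuous.div (by fun_prop) (by fun_prop) ?_
      intro z
      have : (0:ℝ) < max 1 ‖z‖ := by positivity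
      exact_mod_cast this.ne'
    · intro z
      have : (0:ℝ) < max 1 ‖z‖ := by positivity
      rw [mem_closedBall_zero_iff, norm_div, Complex.norm_real, Real.norm_eq_abs, abs_of_pos this, div_le_one this]
      exact le_max_right _ _
  have hMi : Function.Injective M := by
    intro a b hab
    by_cases ha : ‖a‖ ≤ 1
    · have hb : ‖b‖ ≤ 1 := by rw [← hle, ← hab, hle]; exact ha
      rw [hM1 a ha, hM1 b hb] at hab
      exact hi (by simpa using ha) (by simpa using hb) hab
    · have hb : ¬ ‖b‖ ≤ 1 := by rw [← hle, ← hab, hle]; exact ha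
      push Not at ha hb
      have hnn : ‖a‖ = ‖b‖ := by rw [← hM3 a ha.le, ← hM3 b hb.le, hab]
      rw [hM2 a ha.le, hM2 b hb.le, hnn] at hab
      have hb0 : (‖b‖ : ℂ) ≠ 0 := by
        have : ‖b‖ ≠ 0 := by linarith
        exact_mod_cast this
      have h4 := hi (by rw [mem_closedBall_zero_iff, ← hnn]; exact (hn a ha.le).le) (by rw [mem_closedBall_zero_iff]; exact (hn b hb.le).le)
        (mul_left_cancel₀ hb0 hab)
      exact (div_left_inj' hb0).1 h4
  have hMs : Function.Surjective M := by
    intro w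
    by_cases hw : ‖w‖ ≤ 1
    · obtain ⟨z, hz, hzw⟩ := hs (by simpa using hw : w ∈ closedBall (0:ℂ) 1)
      exact ⟨z, by rw [hM1 z (by simpa using hz), hzw]⟩
    · push Not at hw
      obtain ⟨z, hz, hzw⟩ := hs (by rw [mem_closedBall_zero_iff]; exact (hn w hw.le).le : w / (‖w‖:ℂ) ∈ closedBall (0:ℂ) 1)
      have hw0 : (‖w‖ : ℂ) ≠ 0 := by
        have : ‖w‖ ≠ 0 := by linarith
        exact_mod_cast this
      have hz1 : ‖z‖ = 1 := by
        rcases (mem_closedBall_zero_iff.1 hz).lt_or_eq with h | h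
        · have := h1 z h
          rw [hzw, hn w hw.le] at this
          exact absurd this (lt_irrefl _)
        · exact h
      refine ⟨‖w‖ * z, ?_⟩
      have hnz : ‖(‖w‖:ℂ) * z‖ = ‖w‖ := by rw [norm_mul, Complex.norm_real, norm_norm, hz1, mul_one]
      rw [hM2 _ (by rw [hnz]; exact hw.le), hnz, mul_div_cancel_left₀ _ hw0, hzw]
      field_simp
  have hprop : IsProperMap M := by
    rw [isProperMap_iff_tendsto_cocompact]
    refine ⟨hMc, ?_⟩
    rw [← Metric.cobounded_eq_cocompact, ← tendsto_norm_atTop_iff_cobounded]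
    have : Tendsto (fun z : ℂ => ‖z‖) (Bornology.cobounded ℂ) atTop := tendsto_norm_cobounded_atTop
    refine this.congr' ?_
    filter_upwards [this.eventually_ge_atTop 1] with z hz
    exact (hM3 z hz).symm
  have hhomeo : IsHomeomorph M := isHomeomorph_iff_continuous_isClosedMap_bijective.2 ⟨hMc, hprop.isClosedMap, hMi, hMs⟩
  exact ⟨hhomeo.homeomorph, hM1, hlt, hle⟩

open Set Filter Metric Complex in
theorem caratheodory {φ : ℂ → ℂ} (hφ : IsOpenEmbedding φ) :
    ∃ (m : ℂ ≃ₜ ℂ) (f : ℂ → ℂ), (∀ z, ‖m z‖ < 1 ↔ ‖z‖ < 1) ∧ (∀ z, ‖m z‖ ≤ 1 ↔ ‖z‖ ≤ 1) ∧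
      DifferentiableOn ℂ f (φ '' ball 0 1) ∧ DifferentiableOn ℂ (fun z => φ (m z)) (ball 0 1) ∧
      ∀ z ∈ ball (0:ℂ) 1, f (φ (m z)) = z := by
  set U := φ '' ball 0 1 with hUdef
  have hU : IsOpen U := hφ.isOpenMap _ isOpen_ball
  have hUb : Bornology.IsBounded U :=
    (((isCompact_closedBall (0:ℂ) 1).image hφ.continuous).isBounded).subset (image_mono ball_subset_closedBall)
  have hUne : U.Nonempty := ⟨φ 0, 0, by simp, rfl⟩
  have hUs : IsSimplyConnected U := by
    rw [hUdef, hφ.isEmbedding.isSimplyConnected_image]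
    have : ContractibleSpace (ball (0:ℂ) 1) := (convex_ball (0:ℂ) 1).contractibleSpace ⟨0, by simp⟩
    show SimplyConnectedSpace (ball (0:ℂ) 1)
    infer_instance
  obtain ⟨f, g, hf, hg, hfm, hgm, hgf, hfg⟩ := rmt_inverse hU hUb hUs hUne
  -- inverse of φ
  set ψ := Function.invFun φ with hψ
  have hψφ : ∀ z, ψ (φ z) = z := Function.leftInverse_invFun hφ.injective
  have hψc : ContinuousOn ψ (range φ) := by
    rintro _ ⟨z, rfl⟩
    refine ContinuousAt.continuousWithinAt ?_
    rw [hφ.continuousAt_iff.symm]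
    have : ψ ∘ φ = id := funext hψφ
    rw [this]; exact continuousAt_id
  set h : ℂ → ℂ := fun z => ψ (g z) with hh
  set k : ℂ → ℂ := fun z => f (φ z) with hk
  have hφh : ∀ z ∈ ball (0:ℂ) 1, φ (h z) = g z := by
    intro z hz
    obtain ⟨w, hw, he⟩ := hgm hz
    simp only [hh]
    rw [← he, hψφ]
  have hhm : MapsTo h (ball 0 1) (ball 0 1) := by
    intro z hz
    obtain ⟨w, hw, he⟩ := hgm hz
    simp only [hh]
    rw [← he, hψφ]; exact hw
  have hkm : MapsTo k (ball 0 1) (ball 0 1) := fun z hz => hfm ⟨z, hz, rfl⟩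
  have hkh : ∀ z ∈ ball (0:ℂ) 1, k (h z) = z := by
    intro z hz
    simp only [hk]
    rw [hφh z hz, hfg z hz]
  have hhk : ∀ z ∈ ball (0:ℂ) 1, h (k z) = z := by
    intro z hz
    simp only [hk, hh]
    rw [hgf _ ⟨z, hz, rfl⟩, hψφ]
  have hkc : ContinuousOn k (ball 0 1) := hf.continuousOn.comp hφ.continuous.continuousOn (fun z hz => ⟨z, hz, rfl⟩)
  have hUr : U ⊆ range φ := image_subset_range _ _
  have hhc : ContinuousOn h (ball 0 1) := (hψc.mono hUr).comp hg.continuousOn hgm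
  have hgi : InjOn g (ball 0 1) := fun x hx y hy hxy => by rw [← hfg x hx, ← hfg y hy, hxy]
  have hla : ∀ ζ : ℂ, ‖ζ‖ = 1 → ∀ δ > 0, ∀ ε > 0, ∃ r ∈ Ioo (0:ℝ) δ, ∀ z ∈ ball (0:ℂ) 1, ∀ z' ∈ ball (0:ℂ) 1,
      dist z ζ = r → dist z' ζ = r → dist (h z) (h z') ≤ ε := by
    intro ζ hζ δ hδ ε hε
    have huc : UniformContinuousOn ψ (φ '' closedBall 0 1) :=
      ((isCompact_closedBall (0:ℂ) 1).image hφ.continuous).uniformContinuousOn_of_continuous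
        (hψc.mono (image_subset_range _ _))
    obtain ⟨η, hη, hηs⟩ := Metric.uniformContinuousOn_iff.1 huc ε hε
    obtain ⟨r, hr, hrs⟩ := length_area hg hgi (hUb.subset (by rintro _ ⟨z, hz, rfl⟩; exact hgm hz)) hζ hδ (half_pos hη)
    refine ⟨r, hr, fun z hz z' hz' h1 h2 => ?_⟩
    have h3 := hrs z hz z' hz' h1 h2
    have hsub : U ⊆ φ '' closedBall 0 1 := image_mono ball_subset_closedBall
    exact (hηs _ (hsub (hgm hz)) _ (hsub (hgm hz')) (by linarith)).le
  set H := extendFrom (ball (0:ℂ) 1) h with hHdef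
  have hcl : closure (ball (0:ℂ) 1) = closedBall 0 1 := closure_ball _ one_ne_zero
  have hHh : ∀ z ∈ ball (0:ℂ) 1, H z = h z := extendFrom_extends hhc
  have hH1 : ∀ z, ‖z‖ = 1 → ‖H z‖ = 1 := by
    intro z hz
    obtain ⟨y, hy1, hy⟩ := carat_limit hkc hkm hhm hkh hhk hz (hla z hz)
    rw [hHdef, extendFrom_eq (by rw [hcl]; simp [hz]) hy, hy1]
  have hHc : ContinuousOn H (closedBall 0 1) := by
    refine continuousOn_extendFrom hcl.ge ?_
    intro z hz
    rcases (mem_closedBall_zero_iff.1 hz).lt_or_eq with h1 | h1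
    · exact ⟨h z, hhc z (by simpa using h1)⟩
    · obtain ⟨y, hy1, hy⟩ := carat_limit hkc hkm hhm hkh hhk h1 (hla z h1)
      exact ⟨y, hy⟩
  have hHlt : ∀ z, ‖z‖ < 1 → ‖H z‖ < 1 := by
    intro z hz
    have hz' : z ∈ ball (0:ℂ) 1 := by simpa using hz
    rw [hHh z hz']
    simpa using hhm hz'
  have hHi : InjOn H (closedBall 0 1) := by
    intro a ha b hb hab
    rcases (mem_closedBall_zero_iff.1 ha).lt_or_eq with h1 | h1
    · have h2 : ‖b‖ < 1 := by
        by_contra hc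
        have := hH1 b (le_antisymm (by simpa using hb) (not_lt.1 hc))
        rw [← hab] at this
        linarith [hHlt a h1]
      have ha' : a ∈ ball (0:ℂ) 1 := by simpa using h1
      have hb' : b ∈ ball (0:ℂ) 1 := by simpa using h2
      rw [hHh a ha', hHh b hb'] at hab
      rw [← hkh a ha', ← hkh b hb', hab]
    · have h2 : ‖b‖ = 1 := by
        refine le_antisymm (by simpa using hb) ?_
        by_contra hc
        have := hHlt b (not_le.1 hc)
        rw [← hab, hH1 a h1] at this
        linarith
      by_contra hne
      set q := H a with hq
      have hq1 : ‖q‖ = 1 := hH1 a h1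
      have hpre := carat_fibre hkc hkm hhm hkh hhk hHc hHh hq1
      obtain ⟨O, hO, hOne, hOs⟩ := circle_arc hpre inter_subset_left (z1 := a) (z2 := b) ⟨by simp [h1], rfl⟩ ⟨by simp [h2], hab.symm⟩ hne
      have h3 := arc_vanish (Φ := fun z => φ (H z) - φ q) ?_ ?_ hO hOne ?_
      · have h4 : H 0 = q := hφ.injective (sub_eq_zero.1 h3)
        have := hHlt 0 (by simp)
        rw [h4] at this
        linarith
      · refine DifferentiableOn.sub_const ?_ _
        refine hg.congr ?_
        intro z hz
        rw [hHh z hz, hφh z hz]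
      · exact (hφ.continuous.comp_continuousOn hHc).sub continuousOn_const
      · intro z hz
        have := (hOs hz).2
        simp only [mem_ofPred_eq] at this
        simp [this]
  have hHs : closedBall 0 1 ⊆ H '' closedBall 0 1 := by
    rw [← hcl]
    refine closure_minimal ?_ ?_
    · intro w hw
      refine ⟨k w, subset_closure (hkm hw), ?_⟩
      rw [hHh _ (hkm hw), hhk w hw]
    · rw [hcl]
      exact ((isCompact_closedBall _ _).image_of_continuousOn hHc).isClosed
  obtain ⟨m, hm1, hm2, hm3⟩ := carat_radial hHc hHi hHs hHlt hH1
  refine ⟨m, f, hm2, hm3, hf, ?_, ?_⟩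
  · refine hg.congr ?_
    intro z hz
    show φ (m z) = g z
    rw [hm1 z (mem_ball_zero_iff.1 hz).le, hHh z hz, hφh z hz]
  intro z hz
  rw [hm1 z (mem_ball_zero_iff.1 hz).le, hHh z hz]
  exact hkh z hz

/-- Closed sets whose frontier is locally flat. -/
def Nice {X : Type*} [TopologicalSpace X] (A : Set X) : Prop :=
  IsClosed A ∧ ∀ x ∈ frontier A, ∃ e : OpenPartialHomeomorph X ℂ, x ∈ e.source ∧
    ∀ y ∈ e.source, (y ∈ A ↔ (e y).im ≤ 0)

open Set Filter Metric Complex in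
theorem nice_frontier_iff {X : Type*} [TopologicalSpace X] {A : Set X}
    {e : OpenPartialHomeomorph X ℂ} (he : ∀ y ∈ e.source, (y ∈ A ↔ (e y).im ≤ 0))
    {y : X} (hy : y ∈ e.source) : y ∈ frontier A ↔ (e y).im = 0 := by
  have h : e.IsImage A {z : ℂ | z.im ≤ 0} := by
    intro x hx
    exact (he x hx).symm
  have h2 := h.frontier hy
  rw [Complex.frontier_setOfPred_im_le] at h2
  exact h2.symm

open Set Filter Metric Complex in
theorem univBall_im (c : ℂ) {r : ℝ} (hr : 0 < r) (hc : c.im = 0) (z : ℂ) :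
    ∃ t : ℝ, 0 < t ∧ (OpenPartialHomeomorph.univBall c r z).im = t * z.im := by
  refine ⟨r * (√(1 + ‖z‖ ^ 2))⁻¹, by positivity, ?_⟩
  unfold OpenPartialHomeomorph.univBall
  rw [dif_pos hr]
  show ((OpenPartialHomeomorph.unitBallBall c r hr)
    ((OpenPartialHomeomorph.univUnitBall : OpenPartialHomeomorph ℂ ℂ) z)).im = _
  rw [OpenPartialHomeomorph.unitBallBall_apply, OpenPartialHomeomorph.univUnitBall_apply]
  simp only [vadd_eq_add, Complex.add_im, Complex.smul_im, smul_eq_mul, hc]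
  ring

open Set Filter Metric Complex in
theorem half_disc_homeo : ∃ k : ℂ ≃ₜ ℂ, ‖k 0‖ = 1 ∧ ∀ᶠ z in 𝓝 (0:ℂ), (‖k z‖ < 1 ↔ 0 < z.im) := by
  set D : Set ℂ := ball 0 1 ∩ {z | 0 < z.im} with hD
  have hDo : IsOpen D := isOpen_ball.inter (isOpen_lt continuous_const Complex.continuous_im)
  have hconv : Convex ℝ D := by
    refine (convex_ball _ _).inter ?_
    exact convex_halfSpace_im_gt 0
  have hne : (interior D).Nonempty := by
    rw [hDo.interior_eq]
    refine ⟨Complex.I / 2, ?_, ?_⟩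
    · rw [mem_ball_zero_iff]; simp; norm_num
    · simp
  have hb : Bornology.IsBounded D := isBounded_ball.subset inter_subset_left
  obtain ⟨k, hk1, hk2, hk3⟩ := exists_homeomorph_image_interior_closure_frontier_eq_unitBall hconv hne hb
  rw [hDo.interior_eq] at hk1
  have key : ∀ z, ‖k z‖ < 1 ↔ z ∈ D := by
    intro z
    rw [← mem_ball_zero_iff, ← hk1]
    exact k.injective.mem_set_image
  refine ⟨k, ?_, ?_⟩
  · have : (0:ℂ) ∈ frontier D := by
      rw [hDo.frontier_eq]
      refine ⟨?_, by simp [hD]⟩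
      rw [Metric.mem_closure_iff]
      intro ε hε
      refine ⟨((min (ε/2) (1/2) : ℝ) : ℂ) * Complex.I, ⟨?_, ?_⟩, ?_⟩
      · have : 0 < min (ε/2) (1/2) := by positivity
        rw [mem_ball_zero_iff, norm_mul, Complex.norm_real, Real.norm_of_nonneg this.le]
        simp only [Complex.norm_I, mul_one]
        exact (min_le_right _ _).trans_lt (by norm_num)
      · have : 0 < min (ε/2) (1/2) := by positivity
        simpa using this
      · have : 0 < min (ε/2) (1/2) := by positivity
        rw [dist_eq_norm, zero_sub, norm_neg, norm_mul, Complex.norm_real, Real.norm_of_nonneg this.le]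
        simp only [Complex.norm_I, mul_one]
        exact (min_le_left _ _).trans_lt (by linarith)
    have h2 := mem_image_of_mem k this
    rw [hk3] at h2
    simpa using h2
  · filter_upwards [ball_mem_nhds (0:ℂ) one_pos] with z hz
    rw [key]
    exact ⟨fun h => h.2, fun h => ⟨hz, h⟩⟩

open Set Filter Metric Complex in
theorem collar {A : Set ℂ} (hA : Nice A) {p : ℂ} (hp : p ∈ frontier A) :
    ∃ Θ f : ℂ → ℂ, IsOpenEmbedding Θ ∧ Θ 1 = p ∧ (∀ᶠ z in 𝓝 (1:ℂ), (Θ z ∈ A ↔ 1 ≤ ‖z‖)) ∧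
      DifferentiableOn ℂ f (Θ '' ball 0 1) ∧ DifferentiableOn ℂ Θ (ball 0 1) ∧
      ∀ z ∈ ball (0:ℂ) 1, f (Θ z) = z := by
  obtain ⟨e, hpe, he⟩ := hA.2 p hp
  have him : (e p).im = 0 := (nice_frontier_iff he hpe).1 hp
  obtain ⟨δ, hδ, hball⟩ := Metric.isOpen_iff.1 e.open_target (e p) (e.map_source hpe)
  set b := OpenPartialHomeomorph.univBall (e p) δ with hb
  have hbt : ∀ z, b z ∈ e.target := fun z => hball (by
    rw [← OpenPartialHomeomorph.univBall_target (e p) hδ]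
    exact b.map_source (by rw [hb, OpenPartialHomeomorph.univBall_source]; trivial))
  have hψ : IsOpenEmbedding (b.trans e.symm) := by
    apply OpenPartialHomeomorph.isOpenEmbedding
    ext z
    simp [hb]
    exact hbt z
  obtain ⟨k, hk0, hk⟩ := half_disc_homeo
  have hφ : IsOpenEmbedding (fun z => (b.trans e.symm) (k.symm z)) :=
    hψ.comp k.symm.isOpenEmbedding
  obtain ⟨m, f, hm1, hm2, hf, hφd, hfφ⟩ := caratheodory hφ
  set a := m.symm (k 0) with ha
  have hma : m a = k 0 := m.apply_symm_apply _
  have hna : ‖a‖ = 1 := by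
    have h1 := hm1 a
    have h2 := hm2 a
    rw [hma, hk0] at h1 h2
    have := h2.1 le_rfl
    have h3 : ¬ ‖a‖ < 1 := fun h => lt_irrefl _ (h1.2 h)
    linarith [not_lt.1 h3]
  have ha0 : a ≠ 0 := by
    intro h; rw [h] at hna; simp at hna
  have hmaps : ∀ z, a * z ∈ ball (0:ℂ) 1 ↔ z ∈ ball (0:ℂ) 1 := by
    intro z
    rw [mem_ball_zero_iff, mem_ball_zero_iff, norm_mul, hna, one_mul]
  set φ : ℂ → ℂ := fun z => (b.trans e.symm) (k.symm z) with hφdef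
  have himg : (fun z => φ (m (a * z))) '' ball 0 1 ⊆ φ '' ball 0 1 := by
    rintro _ ⟨z, hz, rfl⟩
    refine ⟨m (a * z), ?_, rfl⟩
    rw [mem_ball_zero_iff, hm1, ← mem_ball_zero_iff, hmaps]
    exact hz
  refine ⟨fun z => φ (m (a * z)), fun w => f w / a, ?_, ?_, ?_, ?_, ?_, ?_⟩
  · exact hφ.comp (m.isOpenEmbedding.comp (Homeomorph.mulLeft₀ a ha0).isOpenEmbedding)
  · simp only [mul_one, hma, hφdef, Homeomorph.symm_apply_apply]
    simp [hb, e.left_inv hpe]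
  · have hcont : ContinuousAt (fun z => k.symm (m (a * z))) 1 := by fun_prop
    have h0 : k.symm (m (a * 1)) = 0 := by simp [hma]
    have := hcont.tendsto
    rw [h0] at this
    filter_upwards [this.eventually hk] with z hz
    rw [Homeomorph.apply_symm_apply, hm1, norm_mul, hna, one_mul] at hz
    have hmem : φ (m (a * z)) ∈ e.source := e.map_target (hbt _)
    rw [he _ hmem]
    have h4 : e (φ (m (a * z))) = b (k.symm (m (a * z))) := by
      simp only [hφdef, OpenPartialHomeomorph.coe_trans, Function.comp]
      exact e.right_inv (hbt _)
    rw [h4]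
    obtain ⟨t, ht, hti⟩ := univBall_im (e p) hδ him (k.symm (m (a * z)))
    rw [← hb] at hti
    rw [hti, ← not_lt, mul_pos_iff_of_pos_left ht, ← hz, not_lt]
  · exact (hf.mono himg).div_const a
  · have : (fun z => φ (m (a * z))) = (fun z => φ (m z)) ∘ (fun z => a * z) := rfl
    rw [this]
    refine hφd.comp (by fun_prop) ?_
    intro z hz
    exact (hmaps z).2 hz
  · intro z hz
    have := hfφ (a * z) ((hmaps z).2 hz)
    show f (φ (m (a * z))) / a = z
    rw [this]
    field_simp

open Set Filter Metric Complex in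
theorem arc_piece {A : Set ℂ} (hA : Nice A) {z : ℂ} (hz : z ∈ frontier A) {W : Set ℂ} (hW : IsOpen W)
    (hzW : z ∈ W) :
    ∃ J F : Set ℂ, IsCompact J ∧ J ⊆ frontier A ∩ W ∧ F.Finite ∧ F ⊆ J ∧ z ∈ J \ F ∧
      (∀ x ∈ J \ F, ∀ᶠ y in 𝓝 x, y ∈ frontier A → y ∈ J) ∧
      ∀ G : Set ℂ, G.Finite → J ⊆ closure (J \ G) := by
  obtain ⟨e, hze, he⟩ := hA.2 z hz
  have him : (e z).im = 0 := (nice_frontier_iff he hze).1 hz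
  have hn : e.target ∩ e.symm ⁻¹' W ∈ 𝓝 (e z) := by
    refine inter_mem (e.open_target.mem_nhds (e.map_source hze)) ?_
    refine (e.continuousAt_symm (e.map_source hze)).preimage_mem_nhds ?_
    rw [e.left_inv hze]
    exact hW.mem_nhds hzW
  obtain ⟨δ, hδ, hball⟩ := Metric.mem_nhds_iff.1 hn
  set x0 := (e z).re with hx0
  have hez : e z = (x0 : ℂ) := by
    apply Complex.ext <;> simp [hx0, him]
  set a := x0 - δ / 2 with ha
  set b := x0 + δ / 2 with hb
  have hab : a < b := by rw [ha, hb]; linarith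
  have hmem : ∀ t ∈ Icc a b, (t : ℂ) ∈ e.target ∩ e.symm ⁻¹' W := by
    intro t ht
    apply hball
    rw [mem_ball, hez, dist_eq_norm, ← Complex.ofReal_sub, Complex.norm_real, Real.norm_eq_abs, abs_lt]
    constructor <;> linarith [ht.1, ht.2]
  set γ : ℝ → ℂ := fun t => e.symm (t : ℂ) with hγ
  have hγc : ContinuousOn γ (Icc a b) := by
    intro t ht
    exact ((e.continuousAt_symm (hmem t ht).1).comp Complex.continuous_ofReal.continuousAt).continuousWithinAt
  have heγ : ∀ t ∈ Icc a b, e (γ t) = t := fun t ht => e.right_inv (hmem t ht).1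
  have hγs : ∀ t ∈ Icc a b, γ t ∈ e.source := fun t ht => e.map_target (hmem t ht).1
  have hγi : InjOn γ (Icc a b) := by
    intro s hs t ht h
    have := congrArg e h
    rw [heγ s hs, heγ t ht] at this
    exact_mod_cast this
  refine ⟨γ '' Icc a b, {γ a, γ b}, isCompact_Icc.image_of_continuousOn hγc, ?_, by simp, ?_, ?_, ?_, ?_⟩
  · rintro _ ⟨t, ht, rfl⟩
    refine ⟨?_, (hmem t ht).2⟩
    rw [nice_frontier_iff he (hγs t ht), heγ t ht]
    simp
  · rintro _ (rfl | rfl)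
    · exact ⟨a, ⟨le_rfl, hab.le⟩, rfl⟩
    · exact ⟨b, ⟨hab.le, le_rfl⟩, rfl⟩
  · have h0 : x0 ∈ Icc a b := ⟨by rw [ha]; linarith, by rw [hb]; linarith⟩
    have hz0 : γ x0 = z := by
      simp only [hγ]; rw [← hez, e.left_inv hze]
    refine ⟨⟨x0, h0, hz0⟩, ?_⟩
    rintro (h | h)
    · rw [← hz0] at h
      have := hγi h0 ⟨le_rfl, hab.le⟩ h
      rw [ha] at this; linarith
    · rw [← hz0] at h
      have := hγi h0 ⟨hab.le, le_rfl⟩ h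
      rw [hb] at this; linarith
  · rintro _ ⟨⟨t, ht, rfl⟩, hF⟩
    have hta : a < t := lt_of_le_of_ne ht.1 (by rintro rfl; exact hF (Or.inl rfl))
    have htb : t < b := lt_of_le_of_ne ht.2 (by rintro rfl; exact hF (Or.inr rfl))
    have hc : ContinuousAt (fun y => (e y).re) (γ t) :=
      Complex.continuous_re.continuousAt.comp (e.continuousAt (hγs t ht))
    have hre : (e (γ t)).re ∈ Ioo a b := by rw [heγ t ht]; exact ⟨hta, htb⟩
    filter_upwards [e.open_source.mem_nhds (hγs t ht), hc.preimage_mem_nhds (isOpen_Ioo.mem_nhds hre)]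
      with y hy hyr hyZ
    refine ⟨(e y).re, ⟨hyr.1.le, hyr.2.le⟩, ?_⟩
    have hi : (e y).im = 0 := (nice_frontier_iff he hy).1 hyZ
    have : ((e y).re : ℂ) = e y := by apply Complex.ext <;> simp [hi]
    simp only [hγ]
    rw [this, e.left_inv hy]
  · intro G hG
    rintro _ ⟨t, ht, rfl⟩
    have hS : (Icc a b ∩ γ ⁻¹' G).Finite := by
      have : (Icc a b ∩ γ ⁻¹' G) ⊆ γ ⁻¹' (γ '' (Icc a b ∩ γ ⁻¹' G)) ∩ (Icc a b) := by
        intro s hs; exact ⟨⟨s, hs, rfl⟩, hs.1⟩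
      refine Set.Finite.of_finite_image (f := γ) (hG.subset ?_) (hγi.mono inter_subset_left)
      rintro _ ⟨s, hs, rfl⟩; exact hs.2
    have hd : Dense (Icc a b ∩ γ ⁻¹' G)ᶜ := hS.countable.dense_compl ℝ
    have h1 : Ioo a b ⊆ closure (Ioo a b ∩ (Icc a b ∩ γ ⁻¹' G)ᶜ) := hd.open_subset_closure_inter isOpen_Ioo
    have h2 : t ∈ closure (Ioo a b ∩ (Icc a b ∩ γ ⁻¹' G)ᶜ) := by
      have : t ∈ closure (Ioo a b) := by rw [closure_Ioo hab.ne]; exact ht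
      exact closure_minimal h1 isClosed_closure this
    have h3 : γ t ∈ closure (γ '' (Ioo a b ∩ (Icc a b ∩ γ ⁻¹' G)ᶜ)) :=
      ((hγc t ht).mono (inter_subset_left.trans Ioo_subset_Icc_self)).mem_closure_image h2
    refine closure_mono ?_ h3
    rintro _ ⟨s, hs, rfl⟩
    refine ⟨⟨s, Ioo_subset_Icc_self hs.1, rfl⟩, fun h => hs.2 ⟨Ioo_subset_Icc_self hs.1, h⟩⟩

open Set Filter Metric Complex in
theorem frontier_domain {A : Set ℂ} (hA : Nice A) :
    ∃ I T : Set ℂ, IsClosed I ∧ I ⊆ frontier A ∩ ball 0 (5/2) ∧ T.Finite ∧ T ⊆ I ∧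
      (∀ x ∈ I \ T, ∀ᶠ y in 𝓝 x, y ∈ frontier A → y ∈ I) ∧
      (∀ p ∈ T, p ∈ closure (I \ T)) ∧
      (∀ p ∈ T, ¬ ∀ᶠ y in 𝓝 p, y ∈ frontier A → y ∈ I) ∧
      (∀ x ∈ frontier A ∩ closedBall 0 (3/2), x ∈ I \ T) := by
  have hK : IsCompact (frontier A ∩ closedBall 0 (3/2)) :=
    (isCompact_closedBall _ _).inter_left isClosed_frontier
  have hJ := fun (z : ℂ) (hz : z ∈ frontier A ∩ closedBall 0 (3/2)) =>
    arc_piece hA hz.1 (isOpen_ball (x := (0:ℂ)) (ε := 5/2))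
      (closedBall_subset_ball (by norm_num) hz.2)
  choose J F hJc hJs hFf hFJ hzJ hrel hcl using hJ
  have hU : ∀ (z : ℂ) (hz : z ∈ frontier A ∩ closedBall 0 (3/2)),
      ∃ U : Set ℂ, IsOpen U ∧ z ∈ U ∧ ∀ y ∈ U, y ∈ frontier A → y ∈ J z hz := by
    intro z hz
    have := hrel z hz z (hzJ z hz)
    obtain ⟨U, h1, h2, h3⟩ := _root_.mem_nhds_iff.1 this
    exact ⟨U, h2, h3, fun y hy => h1 hy⟩
  choose U hUo hzU hUJ using hU
  obtain ⟨t, ht⟩ := hK.elim_nhds_subcover' U (fun z hz => (hUo z hz).mem_nhds (hzU z hz))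
  set I : Set ℂ := ⋃ x ∈ t, J x.1 x.2 with hI
  set T0 : Set ℂ := ⋃ x ∈ t, F x.1 x.2 with hT0
  set T : Set ℂ := {p ∈ T0 | ¬ ∀ᶠ y in 𝓝 p, y ∈ frontier A → y ∈ I} with hT
  have hT0f : T0.Finite := t.finite_toSet.biUnion (fun x _ => hFf x.1 x.2)
  have hTf : T.Finite := hT0f.subset (fun x hx => hx.1)
  have hIJ : ∀ x ∈ t, J x.1 x.2 ⊆ I := fun x hx => subset_biUnion_of_mem (u := fun x : ↥(frontier A ∩ closedBall 0 (3/2)) => J x.1 x.2) hx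
  have hTI : T ⊆ I := by
    rintro p ⟨hp, -⟩
    obtain ⟨x, hx, hpx⟩ := mem_iUnion₂.1 hp
    exact hIJ x hx (hFJ _ _ hpx)
  refine ⟨I, T, ?_, ?_, hTf, hTI, ?_, ?_, ?_, ?_⟩
  · exact (t.isCompact_biUnion (fun x _ => hJc x.1 x.2)).isClosed
  · exact iUnion₂_subset fun x _ => hJs x.1 x.2
  · rintro x ⟨hxI, hxT⟩
    by_contra hcon
    obtain ⟨z, hz, hxz⟩ := mem_iUnion₂.1 hxI
    by_cases hxF : x ∈ F z.1 z.2
    · exact hxT ⟨mem_iUnion₂.2 ⟨z, hz, hxF⟩, hcon⟩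
    · apply hcon
      filter_upwards [hrel z.1 z.2 x ⟨hxz, hxF⟩] with y hy hyZ
      exact hIJ z hz (hy hyZ)
  · intro p hp
    obtain ⟨z, hz, hxz⟩ := mem_iUnion₂.1 (hTI hp)
    exact closure_mono (sdiff_subset_sdiff_left (hIJ z hz)) (hcl z.1 z.2 T hTf hxz)
  · intro p hp
    exact hp.2
  · intro x hx
    obtain ⟨z, hz, hxz⟩ := mem_iUnion₂.1 (ht hx)
    refine ⟨hIJ z hz (hUJ _ _ _ hxz hx.1), fun hxT => hxT.2 ?_⟩
    filter_upwards [(hUo z.1 z.2).mem_nhds hxz] with y hy hyZ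
    exact hIJ z hz (hUJ _ _ _ hy hyZ)

/-- The corner-straightening homeomorphism. -/
noncomputable def cornerHomeo (σ : ℝ) (hσ : σ * σ = 1) : ℝ × ℝ ≃ₜ ℂ where
  toFun x := ⟨(1 - x.1) - σ * x.2, min (1 - x.1) (σ * x.2)⟩
  invFun z := (1 - (z.im + max z.re 0), σ * (z.im + max (-z.re) 0))
  left_inv := by
    rintro ⟨r, θ⟩
    have h1 : ∀ t : ℝ, σ * (σ * t) = t := fun t => by rw [← mul_assoc, hσ, one_mul]
    rcases le_total (1 - r) (σ * θ) with h | h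
    · have h2 : max (1 - r - σ * θ) 0 = 0 := max_eq_right (by linarith)
      have h3 : max (-(1 - r - σ * θ)) 0 = -(1 - r - σ * θ) := max_eq_left (by linarith)
      simp only [min_eq_left h, h2, h3]
      ext
      · simp
      · show σ * (1 - r + -(1 - r - σ * θ)) = θ
        rw [show 1 - r + -(1 - r - σ * θ) = σ * θ by ring, h1]
    · have h2 : max (1 - r - σ * θ) 0 = (1 - r - σ * θ) := max_eq_left (by linarith)
      have h3 : max (-(1 - r - σ * θ)) 0 = 0 := max_eq_right (by linarith)
      simp only [min_eq_right h, h2, h3]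
      ext
      · simp
      · simp [h1]
  right_inv := by
    intro z
    have h1 : ∀ t : ℝ, σ * (σ * t) = t := fun t => by rw [← mul_assoc, hσ, one_mul]
    simp only [h1]
    rcases le_total z.re 0 with h | h
    · have h2 : max z.re 0 = 0 := max_eq_right h
      have h3 : max (-z.re) 0 = -z.re := max_eq_left (by linarith)
      simp only [h2, h3]
      apply Complex.ext
      · simp
      · simp [h]
    · have h2 : max z.re 0 = z.re := max_eq_left h
      have h3 : max (-z.re) 0 = 0 := max_eq_right (by linarith)
      simp only [h2, h3]
      apply Complex.ext
      · simp
      · simp [h]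
  continuous_toFun := by
    have : (fun x : ℝ × ℝ => (⟨(1 - x.1) - σ * x.2, min (1 - x.1) (σ * x.2)⟩ : ℂ)) =
        fun x : ℝ × ℝ => (((1 - x.1) - σ * x.2 : ℝ) : ℂ) + ((min (1 - x.1) (σ * x.2) : ℝ) : ℂ) * Complex.I := by
      funext x
      apply Complex.ext <;> simp
    show Continuous (fun x : ℝ × ℝ => (⟨(1 - x.1) - σ * x.2, min (1 - x.1) (σ * x.2)⟩ : ℂ))
    rw [this]
    fun_prop
  continuous_invFun := by
    show Continuous (fun z : ℂ => ((1 - (z.im + max z.re 0), σ * (z.im + max (-z.re) 0)) : ℝ × ℝ))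
    fun_prop

open Set Filter Metric Complex in
theorem arc_dichotomy {I : Set ℂ} (hI : IsClosed I) {g : ℝ → ℂ} {s : Set ℝ} (hs : IsPreconnected s)
    (hg : ∀ t ∈ s, ContinuousAt g t) (h : ∀ t ∈ s, g t ∈ I → ∀ᶠ t' in 𝓝 t, g t' ∈ I) :
    (∀ t ∈ s, g t ∈ I) ∨ (∀ t ∈ s, g t ∉ I) := by
  have := hs.subset_or_subset (u := {t | ∀ᶠ t' in 𝓝 t, g t' ∈ I}) (v := {t | ∀ᶠ t' in 𝓝 t, g t' ∉ I})
    isOpen_setOfPred_eventually_nhds isOpen_setOfPred_eventually_nhds ?_ ?_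
  · rcases this with h1 | h1
    · exact Or.inl fun t ht => (h1 ht).self_of_nhds
    · exact Or.inr fun t ht => (h1 ht).self_of_nhds
  · rw [Set.disjoint_left]
    intro t ht ht'
    exact (Eventually.self_of_nhds (p := fun t' => g t' ∉ I) ht') (Eventually.self_of_nhds (p := fun t' => g t' ∈ I) ht)
  · intro t ht
    by_cases hc : g t ∈ I
    · exact Or.inl (h t ht hc)
    · exact Or.inr ((hg t ht).eventually (hI.isOpen_compl.mem_nhds hc))

open Set Filter Metric Complex in
theorem local_data {A : Set ℂ} (hA : Nice A) {I T : Set ℂ} (hIc : IsClosed I) (hIZ : I ⊆ frontier A)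
    (hTf : T.Finite) (hTI : T ⊆ I)
    (h1 : ∀ x ∈ I \ T, ∀ᶠ y in 𝓝 x, y ∈ frontier A → y ∈ I)
    {p : ℂ} (hpT : p ∈ T) (h2 : p ∈ closure (I \ T))
    (h3 : ¬ ∀ᶠ y in 𝓝 p, y ∈ frontier A → y ∈ I) {W : Set ℂ} (hW : IsOpen W) (hpW : p ∈ W) :
    ∃ (X : ℂ → ℝ) (c : OpenPartialHomeomorph ℂ ℂ), p ∈ c.source ∧ c.source ⊆ W ∧
      ContinuousOn X c.source ∧
      (∀ w ∈ c.source, w ∉ A → ContDiffAt ℝ 2 X w ∧ fderiv ℝ X w ≠ 0) ∧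
      (∀ w ∈ c.source, w ∈ I → w ≠ p → X w < 0) ∧
      (∀ w ∈ c.source, w ∈ frontier A → w ∉ I → 0 < X w) ∧ X p = 0 ∧
      (∀ y ∈ c.source, (y ∈ A ∨ X y ≤ 0) ↔ (c y).im ≤ 0) := by
  obtain ⟨Θ, f, hΘ, hΘ1, hΘA, hfd, hΘd, hfΘ⟩ := collar hA (hIZ (hTI hpT))
  set E := hΘ.toOpenPartialHomeomorph Θ with hE
  have hEΘ : ∀ z, E z = Θ z := fun z => rfl
  have hEs : E.source = univ := by simp [hE]
  have hEsymm : ∀ z, E.symm (Θ z) = z := fun z => E.left_inv (by rw [hEs]; trivial)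
  set G := Complex.polarCoord.symm.trans E with hG
  have hGs : G.source = Complex.polarCoord.target := by
    simp [hG, hEs]
  have hGv : ∀ x : ℝ × ℝ, G x = Θ (x.1 * (Real.cos x.2 + Real.sin x.2 * Complex.I)) := by
    intro x
    simp only [hG, OpenPartialHomeomorph.coe_trans, Function.comp, hEΘ, Complex.polarCoord_symm_apply]
  have h10 : ((1:ℝ), (0:ℝ)) ∈ G.source := by
    rw [hGs, Complex.polarCoord_target]
    exact ⟨by simp, by simp [Real.pi_pos]⟩
  have hG1 : G (1, 0) = p := by rw [hGv]; simp [hΘ1]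
  have hGc : ContinuousAt G (1, 0) := G.continuousAt h10
  -- good neighbourhoods
  have hnorm : ∀ r θ : ℝ, 0 < r → ‖(r:ℂ) * (Real.cos θ + Real.sin θ * Complex.I)‖ = r := by
    intro r θ hr
    rw [norm_mul, Complex.norm_real, Real.norm_of_nonneg hr.le, Complex.ofReal_cos, Complex.ofReal_sin,
      Complex.norm_cos_add_sin_mul_I, mul_one]
  have hev : ∀ᶠ x in 𝓝 ((1:ℝ), (0:ℝ)), x ∈ G.source ∧ (G x ∈ A ↔ 1 ≤ x.1) ∧ G x ∈ W ∧
      (G x ∈ T → G x = p) := by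
    have e1 : ∀ᶠ x in 𝓝 ((1:ℝ), (0:ℝ)), x ∈ G.source := G.open_source.mem_nhds h10
    have e2 : ∀ᶠ x in 𝓝 ((1:ℝ), (0:ℝ)), G x ∈ W := hGc.eventually (by rw [hG1]; exact hW.mem_nhds hpW)
    have e3 : ∀ᶠ x in 𝓝 ((1:ℝ), (0:ℝ)), G x ∈ (T \ {p})ᶜ :=
      hGc.eventually (by rw [hG1]; exact (hTf.subset sdiff_subset).isClosed.isOpen_compl.mem_nhds (by simp))
    have e4 : ∀ᶠ x in 𝓝 ((1:ℝ), (0:ℝ)),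
        (Θ (x.1 * (Real.cos x.2 + Real.sin x.2 * Complex.I)) ∈ A ↔
          1 ≤ ‖(x.1 : ℂ) * (Real.cos x.2 + Real.sin x.2 * Complex.I)‖) := by
      have hc : ContinuousAt (fun x : ℝ × ℝ => (x.1 : ℂ) * (Real.cos x.2 + Real.sin x.2 * Complex.I)) (1, 0) := by
        fun_prop
      have := hc.tendsto
      simp only [Real.cos_zero, Real.sin_zero, Complex.ofReal_one, Complex.ofReal_zero, zero_mul, add_zero, mul_one] at this
      exact this.eventually hΘA
    filter_upwards [e1, e2, e3, e4] with x x1 x2 x3 x4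
    refine ⟨x1, ?_, x2, ?_⟩
    · rw [hGv, x4, hnorm]
      rw [hGs, Complex.polarCoord_target] at x1
      exact x1.1
    · intro h
      by_contra hne
      exact x3 ⟨h, hne⟩
  obtain ⟨η, hη, hball⟩ := Metric.eventually_nhds_iff_ball.1 hev
  have hbox : ∀ r θ : ℝ, (r, θ) ∈ ball ((1:ℝ), (0:ℝ)) η ↔ |r - 1| < η ∧ |θ| < η := by
    intro r θ
    rw [mem_ball, Prod.dist_eq, max_lt_iff, Real.dist_eq, Real.dist_eq, sub_zero]
  set G' := G.restrOpen (ball ((1:ℝ), (0:ℝ)) η) isOpen_ball with hG'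
  have hG's : G'.source = ball ((1:ℝ), (0:ℝ)) η := by
    rw [hG', OpenPartialHomeomorph.restrOpen_source]
    exact inter_eq_right.2 fun x hx => (hball x hx).1
  have hG'v : ∀ x, G' x = G x := fun x => rfl
  have hGZ : ∀ x ∈ ball ((1:ℝ), (0:ℝ)) η, (G x ∈ frontier A ↔ x.1 = 1) := by
    intro x hx
    have him : G'.IsImage {x : ℝ × ℝ | 1 ≤ x.1} A := by
      intro y hy
      rw [hG's] at hy
      exact (hball y hy).2.1
    have h := him.frontier (x := x) (by rw [hG's]; exact hx)
    rw [hG'v] at h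
    rw [h]
    have : {x : ℝ × ℝ | 1 ≤ x.1} = Ici 1 ×ˢ univ := by ext; simp
    rw [this, frontier_prod_univ_eq, frontier_Ici]
    simp
  have hGinj : ∀ θ, |θ| < η → G (1, θ) = p → θ = 0 := by
    intro θ hθ h
    rw [← hG1] at h
    have := G.injOn (hball (1, θ) ((hbox _ _).2 ⟨by simpa using hη, hθ⟩)).1 h10 h
    simpa using this
  have hg : ∀ θ : ℝ, |θ| < η → ContinuousAt (fun t : ℝ => G (1, t)) θ := by
    intro θ hθ
    have h := G.continuousAt (hball (1, θ) ((hbox _ _).2 ⟨by simpa using hη, hθ⟩)).1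
    exact ContinuousAt.comp (g := G) (f := fun t : ℝ => ((1:ℝ), t)) h (by fun_prop)
  have hloc : ∀ θ : ℝ, |θ| < η → θ ≠ 0 → G (1, θ) ∈ I → ∀ᶠ t in 𝓝 θ, G (1, t) ∈ I := by
    intro θ hθ hθ0 hI
    have hT' : G (1, θ) ∉ T := fun h =>
      hθ0 (hGinj θ hθ ((hball (1, θ) ((hbox _ _).2 ⟨by simpa using hη, hθ⟩)).2.2.2 h))
    have e1 := (hg θ hθ).eventually (h1 _ ⟨hI, hT'⟩)
    have e2 : ∀ᶠ t : ℝ in 𝓝 θ, |t| < η := (isOpen_lt continuous_abs continuous_const).mem_nhds hθ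
    filter_upwards [e1, e2] with t ht1 ht2
    exact ht1 ((hGZ (1, t) ((hbox _ _).2 ⟨by simpa using hη, ht2⟩)).2 rfl)
  have dpos := arc_dichotomy hIc (g := fun t : ℝ => G (1, t)) (s := Ioo 0 η) isPreconnected_Ioo
    (fun t ht => hg t (by rw [abs_lt]; constructor <;> linarith [ht.1, ht.2]))
    (fun t ht => hloc t (by rw [abs_lt]; constructor <;> linarith [ht.1, ht.2]) ht.1.ne')
  have dneg := arc_dichotomy hIc (g := fun t : ℝ => G (1, t)) (s := Ioo (-η) 0) isPreconnected_Ioo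
    (fun t ht => hg t (by rw [abs_lt]; constructor <;> linarith [ht.1, ht.2]))
    (fun t ht => hloc t (by rw [abs_lt]; constructor <;> linarith [ht.1, ht.2]) ht.2.ne)
  have hpt : p ∈ G'.target := by
    rw [← hG1, ← hG'v]
    exact G'.map_source (by rw [hG's]; exact mem_ball_self hη)
  have hrep : ∀ y ∈ G'.target, ∃ r θ : ℝ, |r - 1| < η ∧ |θ| < η ∧ G (r, θ) = y ∧ G'.symm y = (r, θ) := by
    intro y hy
    have := G'.map_target hy
    rw [hG's] at this
    refine ⟨(G'.symm y).1, (G'.symm y).2, ((hbox _ _).1 this).1, ((hbox _ _).1 this).2, ?_, rfl⟩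
    rw [← hG'v]
    exact G'.right_inv hy
  have hσ : ∃ σ : ℝ, (σ = 1 ∨ σ = -1) ∧ ∀ θ : ℝ, |θ| < η →
      (σ * θ < 0 → G (1, θ) ∈ I) ∧ (0 < σ * θ → G (1, θ) ∉ I) := by
    rcases dpos with dp | dp <;> rcases dneg with dn | dn
    · exfalso
      apply h3
      filter_upwards [G'.open_target.mem_nhds hpt] with y hy hyZ
      obtain ⟨r, θ, hr, hθ, rfl, -⟩ := hrep y hy
      have hr1 : r = 1 := (hGZ (r, θ) ((hbox _ _).2 ⟨hr, hθ⟩)).1 hyZ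
      subst hr1
      rw [abs_lt] at hθ
      rcases lt_trichotomy θ 0 with h | h | h
      · exact dn θ ⟨hθ.1, h⟩
      · subst h; rw [hG1]; exact hTI hpT
      · exact dp θ ⟨h, hθ.2⟩
    · refine ⟨-1, Or.inr rfl, fun θ hθ => ?_⟩
      rw [abs_lt] at hθ
      exact ⟨fun h => dp θ ⟨by linarith, hθ.2⟩, fun h => dn θ ⟨hθ.1, by linarith⟩⟩
    · refine ⟨1, Or.inl rfl, fun θ hθ => ?_⟩
      rw [abs_lt] at hθ
      exact ⟨fun h => dn θ ⟨hθ.1, by linarith⟩, fun h => dp θ ⟨by linarith, hθ.2⟩⟩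
    · exfalso
      rw [_root_.mem_closure_iff] at h2
      obtain ⟨y, hy, hyI, hyT⟩ := h2 _ G'.open_target hpt
      obtain ⟨r, θ, hr, hθ, rfl, -⟩ := hrep y hy
      have hr1 : r = 1 := (hGZ (r, θ) ((hbox _ _).2 ⟨hr, hθ⟩)).1 (hIZ hyI)
      subst hr1
      rw [abs_lt] at hθ
      rcases lt_trichotomy θ 0 with h | h | h
      · exact dn θ ⟨hθ.1, h⟩ hyI
      · subst h; rw [hG1] at hyT; exact hyT hpT
      · exact dp θ ⟨h, hθ.2⟩ hyI
  obtain ⟨σ, hσ1, hσI⟩ := hσ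
  have hσσ : σ * σ = 1 := by rcases hσ1 with rfl | rfl <;> norm_num
  set X : ℂ → ℝ := fun w => σ * (E.symm w).im with hX
  have hXv : ∀ r θ : ℝ, X (G (r, θ)) = r * (σ * Real.sin θ) := by
    intro r θ
    simp only [hX, hGv, hEsymm]
    simp [Complex.cos_ofReal_re, Complex.sin_ofReal_re, Complex.cos_ofReal_im]
    ring
  have hrpi : ∀ r θ : ℝ, |r - 1| < η → |θ| < η → 0 < r ∧ |θ| < Real.pi := by
    intro r θ hr hθ
    have := (hball (r, θ) ((hbox _ _).2 ⟨hr, hθ⟩)).1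
    rw [hGs, Complex.polarCoord_target] at this
    exact ⟨this.1, abs_lt.2 this.2⟩
  have hsin : ∀ θ : ℝ, |θ| < Real.pi → (0 < σ * Real.sin θ ↔ 0 < σ * θ) ∧ (σ * Real.sin θ < 0 ↔ σ * θ < 0) := by
    intro θ hθ
    rw [abs_lt] at hθ
    rcases lt_trichotomy θ 0 with h | h | h
    · have hs := Real.sin_neg_of_neg_of_neg_pi_lt h hθ.1
      rcases hσ1 with rfl | rfl <;> constructor <;> constructor <;> intro _ <;> linarith
    · subst h; simp
    · have hs := Real.sin_pos_of_pos_of_lt_pi h hθ.2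
      rcases hσ1 with rfl | rfl <;> constructor <;> constructor <;> intro _ <;> linarith
  set c := G'.symm.trans (cornerHomeo σ hσσ).toOpenPartialHomeomorph with hc
  have hcs : c.source = G'.target := by simp [hc]
  have hcv : ∀ y, c y = cornerHomeo σ hσσ (G'.symm y) := fun y => rfl
  have hXneg : ∀ r θ : ℝ, |r - 1| < η → |θ| < η → (X (G (r, θ)) < 0 ↔ σ * θ < 0) ∧ (0 < X (G (r, θ)) ↔ 0 < σ * θ) := by
    intro r θ hr hθ
    obtain ⟨hr0, hpi⟩ := hrpi r θ hr hθ
    rw [hXv, ← (hsin θ hpi).1, ← (hsin θ hpi).2]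
    exact ⟨⟨fun h => by by_contra h'; exact absurd h (not_lt.2 (mul_nonneg hr0.le (not_lt.1 h'))), fun h => mul_neg_of_pos_of_neg hr0 h⟩,
      mul_pos_iff_of_pos_left hr0⟩
  refine ⟨X, c, by rw [hcs]; exact hpt, ?_, ?_, ?_, ?_, ?_, ?_, ?_⟩
  · intro y hy
    rw [hcs] at hy
    obtain ⟨r, θ, hr, hθ, rfl, -⟩ := hrep y hy
    exact (hball (r, θ) ((hbox _ _).2 ⟨hr, hθ⟩)).2.2.1
  · have : ContinuousOn E.symm c.source := by
      refine E.continuousOn_symm.mono ?_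
      intro y hy
      rw [hcs] at hy
      obtain ⟨r, θ, hr, hθ, rfl, -⟩ := hrep y hy
      rw [hGv]
      exact E.map_source (by rw [hEs]; trivial)
    exact continuousOn_const.mul (Complex.continuous_im.comp_continuousOn this)
  · intro w hw hwA
    rw [hcs] at hw
    obtain ⟨r, θ, hr, hθ, rfl, -⟩ := hrep w hw
    have hr1 : r < 1 := by
      have := (hball (r, θ) ((hbox _ _).2 ⟨hr, hθ⟩)).2.1
      by_contra h
      exact hwA (this.2 (not_lt.1 h))
    have hr0 := (hrpi r θ hr hθ).1
    rw [hGv]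
    set z : ℂ := (r:ℂ) * (Real.cos θ + Real.sin θ * Complex.I) with hz
    have hzb : z ∈ ball (0:ℂ) 1 := by rw [mem_ball_zero_iff, hz, hnorm r θ hr0]; exact hr1
    have hop : IsOpen (Θ '' ball 0 1) := hΘ.isOpenMap _ isOpen_ball
    have hmem : Θ z ∈ Θ '' ball 0 1 := ⟨z, hzb, rfl⟩
    have hcd : ContDiffAt ℝ 2 X (Θ z) := by
      have hfa : ContDiffAt ℂ 2 f (Θ z) := (hfd.contDiffOn hop).contDiffAt (hop.mem_nhds hmem)
      have hfr : ContDiffAt ℝ 2 f (Θ z) := hfa.restrict_scalars ℝ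
      have h4 : ContDiffAt ℝ 2 (fun w => σ * (Complex.imCLM (f w))) (Θ z) :=
        contDiffAt_const.mul (Complex.imCLM.contDiff.contDiffAt.comp _ hfr)
      refine h4.congr_of_eventuallyEq ?_
      filter_upwards [hop.mem_nhds hmem] with w hw
      obtain ⟨z', hz', rfl⟩ := hw
      simp [hX, hEsymm, hfΘ z' hz']
    refine ⟨hcd, fun h0 => ?_⟩
    have hX' : HasFDerivAt X (0 : ℂ →L[ℝ] ℝ) (Θ z) := by
      rw [← h0]; exact (hcd.differentiableAt (by norm_num)).hasFDerivAt
    have hΘ' : DifferentiableAt ℝ Θ z :=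
      ((hΘd z hzb).differentiableAt (isOpen_ball.mem_nhds hzb)).restrictScalars ℝ
    have hcomp := hX'.comp z hΘ'.hasFDerivAt
    have heq : X ∘ Θ = fun z => (σ • Complex.imCLM) z := by
      funext z; simp [hX, hEsymm]
    rw [heq] at hcomp
    have huniq := hcomp.unique (σ • Complex.imCLM).hasFDerivAt
    have := congrArg (fun L : ℂ →L[ℝ] ℝ => L Complex.I) huniq
    simp at this
    rcases hσ1 with rfl | rfl <;> norm_num at this
  · intro w hw hwI hwp
    rw [hcs] at hw
    obtain ⟨r, θ, hr, hθ, rfl, -⟩ := hrep w hw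
    have hr1 : r = 1 := (hGZ (r, θ) ((hbox _ _).2 ⟨hr, hθ⟩)).1 (hIZ hwI)
    subst hr1
    rw [(hXneg 1 θ hr hθ).1]
    by_contra hcon
    rcases (not_lt.1 hcon).lt_or_eq with h | h
    · exact (hσI θ hθ).2 h hwI
    · have : θ = 0 := by rcases hσ1 with rfl | rfl <;> linarith
      subst this
      exact hwp hG1
  · intro w hw hwZ hwI
    rw [hcs] at hw
    obtain ⟨r, θ, hr, hθ, rfl, -⟩ := hrep w hw
    have hr1 : r = 1 := (hGZ (r, θ) ((hbox _ _).2 ⟨hr, hθ⟩)).1 hwZ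
    subst hr1
    rw [(hXneg 1 θ hr hθ).2]
    by_contra hcon
    rcases (not_lt.1 hcon).lt_or_eq with h | h
    · exact hwI ((hσI θ hθ).1 h)
    · have : θ = 0 := by rcases hσ1 with rfl | rfl <;> linarith
      subst this
      rw [hG1] at hwI
      exact hwI (hTI hpT)
  · rw [← hG1, hXv]; simp
  · intro y hy
    rw [hcs] at hy
    rw [hcv]
    obtain ⟨r, θ, hr, hθ, rfl, hs⟩ := hrep y hy
    rw [hs, (hball (r, θ) ((hbox _ _).2 ⟨hr, hθ⟩)).2.1, ← not_lt (a := (0:ℝ)), (hXneg r θ hr hθ).2]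
    show (1 ≤ r ∨ ¬ 0 < σ * θ) ↔ min (1 - r) (σ * θ) ≤ 0
    rw [min_le_iff, not_lt, sub_nonpos]

open Set Filter Metric Complex in
theorem global_data {A : Set ℂ} (hA : Nice A) :
    ∃ (I T V : Set ℂ) (X : ℂ → ℝ), IsClosed I ∧ I ⊆ frontier A ∩ ball 0 (5/2) ∧ T.Finite ∧ T ⊆ I ∧
      (∀ x ∈ I \ T, ∀ᶠ y in 𝓝 x, y ∈ frontier A → y ∈ I) ∧
      (∀ x ∈ frontier A ∩ closedBall 0 (3/2), x ∈ I \ T) ∧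
      IsOpen V ∧ T ⊆ V ∧ V ⊆ ball 0 (5/2) \ closedBall 0 (3/2) ∧ ContinuousOn X V ∧
      (∀ w ∈ V, w ∉ A → ContDiffAt ℝ 2 X w ∧ fderiv ℝ X w ≠ 0) ∧
      (∀ w ∈ V, w ∈ I \ T → X w < 0) ∧
      (∀ w ∈ V, w ∈ frontier A → w ∉ I → 0 < X w) ∧ (∀ p ∈ T, X p = 0) ∧
      ∀ p ∈ T, ∃ c : OpenPartialHomeomorph ℂ ℂ, p ∈ c.source ∧ c.source ⊆ V ∧
        (∀ y ∈ c.source, (y ∈ A ∨ X y ≤ 0) ↔ (c y).im ≤ 0) := by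
  obtain ⟨I, T, hIc, hIZ, hTf, hTI, h1, h2, h3, h4⟩ := frontier_domain hA
  obtain ⟨U, hU, hUd⟩ := hTf.t2_separation
  have hdat := fun (p : ℂ) (hp : p ∈ T) => local_data hA hIc (hIZ.trans inter_subset_left) hTf hTI h1 hp
    (h2 p hp) (h3 p hp) (W := U p ∩ (ball 0 (5/2) \ closedBall 0 (3/2)))
    ((hU p).2.inter (isOpen_ball.sdiff isClosed_closedBall))
    ⟨(hU p).1, (hIZ (hTI hp)).2, fun h => (h4 p ⟨(hIZ (hTI hp)).1, h⟩).2 hp⟩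
  choose X c hpc hcW hXc hXs hXn hXp hX0 hXch using hdat
  classical
  set Y : ℂ → ℝ := fun w => if h : ∃ p : T, w ∈ (c p.1 p.2).source then X h.choose.1 h.choose.2 w else 0
    with hY
  have hYX : ∀ (p : ℂ) (hp : p ∈ T), EqOn Y (X p hp) (c p hp).source := by
    intro p hp w hw
    have h : ∃ p : T, w ∈ (c p.1 p.2).source := ⟨⟨p, hp⟩, hw⟩
    have hch : h.choose = ⟨p, hp⟩ := by
      by_contra hne
      have hne' : h.choose.1 ≠ p := fun h' => hne (Subtype.ext h')
      have := hUd h.choose.2 hp hne'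
      exact Set.disjoint_left.1 this (hcW _ _ h.choose_spec).1 (hcW p hp hw).1
    simp only [hY, dif_pos h]
    rw [hch]
  set V : Set ℂ := ⋃ p : T, (c p.1 p.2).source with hV
  have hVo : IsOpen V := isOpen_iUnion fun p => (c p.1 p.2).open_source
  have hYev : ∀ (p : ℂ) (hp : p ∈ T), ∀ w ∈ (c p hp).source, Y =ᶠ[𝓝 w] X p hp := fun p hp w hw =>
    (hYX p hp).eventuallyEq_of_mem ((c p hp).open_source.mem_nhds hw)
  refine ⟨I, T, V, Y, hIc, hIZ, hTf, hTI, h1, h4, hVo, ?_, ?_, ?_, ?_, ?_, ?_, ?_, ?_⟩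
  · intro p hp
    exact mem_iUnion.2 ⟨⟨p, hp⟩, hpc p hp⟩
  · exact iUnion_subset fun p => (hcW p.1 p.2).trans inter_subset_right
  · intro w hw
    obtain ⟨⟨p, hp⟩, hwp⟩ := mem_iUnion.1 hw
    exact (((hXc p hp).continuousAt ((c p hp).open_source.mem_nhds hwp)).congr
      (hYev p hp w hwp).symm).continuousWithinAt
  · intro w hw hwA
    obtain ⟨⟨p, hp⟩, hwp⟩ := mem_iUnion.1 hw
    obtain ⟨ha, hb⟩ := hXs p hp w hwp hwA
    refine ⟨ha.congr_of_eventuallyEq (hYev p hp w hwp), ?_⟩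
    rw [(hYev p hp w hwp).fderiv_eq]
    exact hb
  · intro w hw hwI
    obtain ⟨⟨p, hp⟩, hwp⟩ := mem_iUnion.1 hw
    rw [hYX p hp hwp]
    exact hXn p hp w hwp hwI.1 (fun h => hwI.2 (h ▸ hp))
  · intro w hw hwZ hwI
    obtain ⟨⟨p, hp⟩, hwp⟩ := mem_iUnion.1 hw
    rw [hYX p hp hwp]
    exact hXp p hp w hwp hwZ hwI
  · intro p hp
    rw [hYX p hp (hpc p hp)]
    exact hX0 p hp
  · intro p hp
    refine ⟨c p hp, hpc p hp, subset_iUnion (fun p : T => (c p.1 p.2).source) ⟨p, hp⟩, ?_⟩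
    intro y hy
    rw [hYX p hp hy]
    exact hXch p hp y hy

open Set Filter Metric Complex in
theorem regular_chart {v : ℂ → ℝ} {x : ℂ} (hv : ContDiffAt ℝ 2 v x) (hd : fderiv ℝ v x ≠ 0) :
    ∃ e : OpenPartialHomeomorph ℂ ℂ, x ∈ e.source ∧ ∀ y, (e y).im = v y := by
  set α := fderiv ℝ v x 1 with hα
  set β := fderiv ℝ v x Complex.I with hβ
  have hfd : ∀ h : ℂ, fderiv ℝ v x h = α * h.re + β * h.im := by
    intro h
    have : h = h.re • (1:ℂ) + h.im • Complex.I := by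
      apply Complex.ext <;> simp
    conv_lhs => rw [this]
    rw [map_add, map_smul, map_smul, smul_eq_mul, smul_eq_mul, ← hα, ← hβ]
    ring
  have hκ : (⟨β, α⟩ : ℂ) ≠ 0 := by
    intro h
    have hb : β = 0 := congrArg Complex.re h
    have ha : α = 0 := congrArg Complex.im h
    apply hd
    ext h
    rw [hfd, ha, hb]; simp
  set F : ℂ → ℂ := fun y => ((β * Complex.reCLM y - α * Complex.imCLM y : ℝ) : ℂ) + (v y : ℂ) * Complex.I with hF
  have hFc : ContDiffAt ℝ 2 F x := by
    have h1 : ContDiffAt ℝ 2 (fun y : ℂ => ((β * Complex.reCLM y - α * Complex.imCLM y : ℝ) : ℂ)) x := by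
      refine Complex.ofRealCLM.contDiff.contDiffAt.comp x ?_
      exact (contDiffAt_const.mul Complex.reCLM.contDiff.contDiffAt).sub
        (contDiffAt_const.mul Complex.imCLM.contDiff.contDiffAt)
    have h2 : ContDiffAt ℝ 2 (fun y : ℂ => (v y : ℂ)) x :=
      Complex.ofRealCLM.contDiff.contDiffAt.comp x hv
    exact h1.add (h2.mul contDiffAt_const)
  set M : ℂ ≃L[ℝ] ℂ := (ContinuousLinearEquiv.unitsEquivAut ℂ (Units.mk0 _ hκ)).restrictScalars ℝ with hM
  have hMv : ∀ h, M h = h * ⟨β, α⟩ := fun h => rfl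
  have hF' : HasFDerivAt F (M : ℂ →L[ℝ] ℂ) x := by
    have hv' : HasFDerivAt v (fderiv ℝ v x) x := (hv.differentiableAt (by norm_num)).hasFDerivAt
    have hlin : HasFDerivAt (fun y : ℂ => ((β * Complex.reCLM y - α * Complex.imCLM y : ℝ) : ℂ))
        (Complex.ofRealCLM.comp (β • Complex.reCLM - α • Complex.imCLM)) x :=
      (Complex.ofRealCLM.comp (β • Complex.reCLM - α • Complex.imCLM)).hasFDerivAt
    have h2 : HasFDerivAt (fun y : ℂ => (v y : ℂ)) (Complex.ofRealCLM.comp (fderiv ℝ v x)) x :=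
      Complex.ofRealCLM.hasFDerivAt.comp x hv'
    have h3 := hlin.add (h2.mul_const Complex.I)
    refine h3.congr_fderiv ?_
    ext h
    simp [hMv, hfd]
    apply Complex.ext <;> simp <;> ring
  refine ⟨hFc.toOpenPartialHomeomorph F hF' (by norm_num), hFc.mem_toOpenPartialHomeomorph_source hF' (by norm_num), ?_⟩
  intro y
  show (F y).im = v y
  simp [hF]

open Set Filter Metric Complex in
theorem smooth_bump {s u : Set ℂ} (hs : IsClosed s) (hu : IsOpen u) (hsu : s ⊆ u) :
    ∃ (f : ℂ → ℝ) (N : Set ℂ), ContDiff ℝ 2 f ∧ (∀ x, f x ∈ Icc (0:ℝ) 1) ∧ IsOpen N ∧ s ⊆ N ∧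
      (∀ x ∈ N, f x = 1) ∧ tsupport f ⊆ u := by
  obtain ⟨N, hN, hsN, hNu⟩ := normal_exists_closure_subset hs hu hsu
  obtain ⟨N', hN', hNN', hN'u⟩ := normal_exists_closure_subset isClosed_closure hu hNu
  obtain ⟨f, hf0, hf1, hf⟩ := exists_contMDiffMap_zero_one_of_isClosed (n := (2 : ℕ∞)) (modelWithCornersSelf ℝ ℂ)
    (s := N'ᶜ) (t := closure N) hN'.isClosed_compl isClosed_closure
    (Set.disjoint_left.2 fun x hx hx' => hx (hNN' hx'))
  refine ⟨f, N, ?_, hf, hN, hsN, fun x hx => hf1 (subset_closure hx), ?_⟩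
  · exact contMDiff_iff_contDiff.1 f.contMDiff
  · refine (closure_mono ?_).trans hN'u
    intro x hx
    by_contra h
    exact hx (hf0 h)

open Set Filter Metric Complex in
theorem generic_perturb {u : ℂ → ℝ} (hu : ContDiff ℝ 2 u) {ε : ℝ} (hε : 0 < ε) :
    ∃ (L : ℂ →L[ℝ] ℝ) (b : ℝ), ‖L‖ < ε ∧ |b| < ε ∧
      ∀ w, u w + (L w + b) = 0 → fderiv ℝ u w + L ≠ 0 := by
  set Φ : ℂ → (ℂ →L[ℝ] ℝ) × ℝ := fun w => (-fderiv ℝ u w, -u w + fderiv ℝ u w w) with hΦ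
  have hu' : ContDiff ℝ 1 (fderiv ℝ u) := hu.fderiv_right (by norm_num)
  have hΦc : ContDiff ℝ 1 Φ := by
    refine hu'.neg.prodMk ((hu.of_le (by norm_num)).neg.add ?_)
    exact hu'.clm_apply contDiff_id
  have hdim : Module.finrank ℝ ℂ < Module.finrank ℝ ((ℂ →L[ℝ] ℝ) × ℝ) := by
    have e : (ℂ →L[ℝ] ℝ) ≃ₗ[ℝ] (ℂ →ₗ[ℝ] ℝ) := LinearMap.toContinuousLinearMap.symm
    rw [Module.finrank_prod, e.finrank_eq, Module.finrank_linearMap, Complex.finrank_real_complex, Module.finrank_self]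
    norm_num
  have hdense := hΦc.dense_compl_range_of_finrank_lt_finrank hdim
  obtain ⟨⟨L, b⟩, hLb, hmem⟩ := Metric.dense_iff.1 hdense 0 ε hε
  rw [mem_ball_zero_iff, Prod.norm_def, max_lt_iff] at hLb
  refine ⟨L, b, hLb.1, by simpa using hLb.2, ?_⟩
  intro w hw h0
  apply hmem
  have hL : L = -fderiv ℝ u w := by rw [← sub_eq_zero, sub_neg_eq_add, add_comm]; exact h0
  refine ⟨w, ?_⟩
  simp only [hΦ]
  ext1
  · exact hL.symm
  · show -u w + fderiv ℝ u w w = b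
    have : L w = -fderiv ℝ u w w := by rw [hL]; rfl
    linarith

open Set Filter Metric Complex in
theorem planar_u {A : Set ℂ} (hA : Nice A) :
    ∃ (I T N : Set ℂ) (u : ℂ → ℝ), T ⊆ I ∧ IsOpen N ∧ T ⊆ N ∧ Continuous u ∧
      (∀ x, x ∉ A → ContDiffAt ℝ 2 u x) ∧ (∀ x ∈ N, x ∉ A → fderiv ℝ u x ≠ 0) ∧
      (∀ x ∈ I \ T, u x < 0) ∧ (∀ x ∈ frontier A, x ∉ I → 0 < u x) ∧
      (∀ x ∈ closedBall (0:ℂ) (3/2), u x = -1) ∧ (∀ x : ℂ, 5/2 ≤ ‖x‖ → u x = 1) ∧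
      ∀ p ∈ T, ∃ c : OpenPartialHomeomorph ℂ ℂ, p ∈ c.source ∧ c.source ⊆ N ∧
        (∀ y ∈ c.source, (y ∈ A ∨ u y ≤ 0) ↔ (c y).im ≤ 0) := by
  obtain ⟨I, T, V, X, hIc, hIZ, hTf, hTI, h1, h4, hVo, hTV, hVs, hXc, hXs, hXn, hXp, hX0, hXch⟩ := global_data hA
  obtain ⟨χ, N, hχ, hχ01, hNo, hTN, hN1, hχV⟩ := smooth_bump hTf.isClosed hVo hTV
  have hNV : N ⊆ V := fun x hx => hχV (subset_tsupport _ (by simp [hN1 x hx]))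
  set Cm : Set ℂ := I ∪ closedBall 0 (3/2) with hCm
  set Cp : Set ℂ := closure (frontier A \ I) ∪ {w | 5/2 ≤ ‖w‖} with hCp
  have hCmc : IsClosed Cm := hIc.union isClosed_closedBall
  have hCpc : IsClosed Cp := isClosed_closure.union (isClosed_le continuous_const continuous_norm)
  have hnot : ∀ x ∈ I \ T, x ∉ closure (frontier A \ I) := by
    intro x hx hcl
    obtain ⟨U, hU1, hU2, hU3⟩ := _root_.mem_nhds_iff.1 (h1 x hx)
    obtain ⟨y, hyU, hyZ, hyI⟩ := _root_.mem_closure_iff.1 hcl U hU2 hU3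
    exact hyI (hU1 hyU hyZ)
  have hclZ : closure (frontier A \ I) ⊆ frontier A := closure_minimal sdiff_subset isClosed_frontier
  have hdisj : ∀ x ∈ Cm, x ∈ Cp → x ∈ T := by
    rintro x (hx | hx) (hx' | hx')
    · by_contra h
      exact hnot x ⟨hx, h⟩ hx'
    · have := mem_ball_zero_iff.1 (hIZ hx).2
      have h5 : 5/2 ≤ ‖x‖ := hx'
      linarith
    · exact (hnot x (h4 x ⟨hclZ hx', hx⟩) hx').elim
    · have := mem_closedBall_zero_iff.1 hx
      have h5 : 5/2 ≤ ‖x‖ := hx'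
      linarith
  obtain ⟨g, N', hg, hg01, -, hCN', hg1, hgs⟩ := smooth_bump (s := Cm \ N) (u := (Cp \ N)ᶜ)
    (hCmc.inter hNo.isClosed_compl) (hCpc.inter hNo.isClosed_compl).isOpen_compl
    (fun x hx hx' => hx.2 (hTN (hdisj x hx.1 hx'.1)))
  set d : ℂ → ℝ := fun x => 1 - 2 * g x with hd
  have hdm : ∀ x ∈ Cm, x ∉ N → d x = -1 := by
    intro x hx hxN
    simp only [hd, hg1 x (hCN' ⟨hx, hxN⟩)]; norm_num
  have hdp : ∀ x ∈ Cp, x ∉ N → d x = 1 := by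
    intro x hx hxN
    have : g x = 0 := image_eq_zero_of_notMem_tsupport (fun h => hgs h ⟨hx, hxN⟩)
    simp [hd, this]
  have hdc : ContDiff ℝ 2 d := contDiff_const.sub (contDiff_const.mul hg)
  set u : ℂ → ℝ := fun x => χ x * X x + (1 - χ x) * d x with hu
  have huN : ∀ x ∈ N, u x = X x := by
    intro x hx; simp [hu, hN1 x hx]
  have huV : ∀ x, x ∉ V → u x = d x := by
    intro x hx
    have : χ x = 0 := image_eq_zero_of_notMem_tsupport (fun h => hx (hχV h))
    simp [hu, this]
  have huV' : ∀ x, x ∉ V → u =ᶠ[𝓝 x] d := by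
    intro x hx
    have : (tsupport χ)ᶜ ∈ 𝓝 x := (isClosed_tsupport χ).isOpen_compl.mem_nhds (fun h => hx (hχV h))
    filter_upwards [this] with y hy
    have : χ y = 0 := image_eq_zero_of_notMem_tsupport hy
    simp [hu, this]
  have huN' : ∀ x ∈ N, u =ᶠ[𝓝 x] X := by
    intro x hx
    filter_upwards [hNo.mem_nhds hx] with y hy
    exact huN y hy
  have hneg : ∀ x ∈ I \ T, u x < 0 := by
    intro x hx
    by_cases hxN : x ∈ N
    · rw [huN x hxN]; exact hXn x (hNV hxN) hx
    have hdx := hdm x (Or.inl hx.1) hxN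
    by_cases hxV : x ∈ V
    · have := hXn x hxV hx
      have h01 := hχ01 x
      simp only [hu, hdx]
      rcases h01.1.eq_or_lt with h | h
      · rw [← h]; norm_num
      · have := mul_neg_of_pos_of_neg h this
        linarith [h01.2]
    · rw [huV x hxV, hdx]; norm_num
  have hpos : ∀ x ∈ frontier A, x ∉ I → 0 < u x := by
    intro x hx hxI
    by_cases hxN : x ∈ N
    · rw [huN x hxN]; exact hXp x (hNV hxN) hx hxI
    have hdx := hdp x (Or.inl (subset_closure ⟨hx, hxI⟩)) hxN
    by_cases hxV : x ∈ V
    · have := hXp x hxV hx hxI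
      have h01 := hχ01 x
      simp only [hu, hdx]
      rcases h01.1.eq_or_lt with h | h
      · rw [← h]; norm_num
      · have := mul_pos h this
        linarith [h01.2]
    · rw [huV x hxV, hdx]; norm_num
  refine ⟨I, T, N, u, hTI, hNo, hTN, ?_, ?_, ?_, hneg, hpos, ?_, ?_, ?_⟩
  · rw [continuous_iff_continuousAt]
    intro x
    by_cases hxV : x ∈ V
    · have := hXc.continuousAt (hVo.mem_nhds hxV)
      exact (hχ.continuous.continuousAt.mul this).add
        ((continuousAt_const.sub hχ.continuous.continuousAt).mul hdc.continuous.continuousAt)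
    · exact hdc.continuous.continuousAt.congr (huV' x hxV).symm
  · intro x hxA
    by_cases hxV : x ∈ V
    · have := (hXs x hxV hxA).1
      exact (hχ.contDiffAt.mul this).add ((contDiffAt_const.sub hχ.contDiffAt).mul hdc.contDiffAt)
    · exact hdc.contDiffAt.congr_of_eventuallyEq (huV' x hxV)
  · intro x hx hxA
    rw [(huN' x hx).fderiv_eq]
    exact (hXs x (hNV hx) hxA).2
  · intro x hx
    have hxV : x ∉ V := fun h => (hVs h).2 hx
    rw [huV x hxV]
    exact hdm x (Or.inr hx) (fun h => hxV (hNV h))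
  · intro x hx
    have hxV : x ∉ V := fun h => by
      have := mem_ball_zero_iff.1 (hVs h).1
      linarith
    rw [huV x hxV]
    exact hdp x (Or.inr hx) (fun h => hxV (hNV h))
  · intro p hp
    obtain ⟨c, hpc, hcV, hc⟩ := hXch p hp
    refine ⟨c.restrOpen N hNo, ?_, ?_, ?_⟩
    · rw [OpenPartialHomeomorph.restrOpen_source]; exact ⟨hpc, hTN hp⟩
    · rw [OpenPartialHomeomorph.restrOpen_source]; exact inter_subset_right
    · intro y hy
      rw [OpenPartialHomeomorph.restrOpen_source] at hy
      rw [huN y hy.2]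
      exact hc y hy.1

open Set Filter Metric Complex in
theorem planar_perturb {A N : Set ℂ} (hA : IsClosed A) {u : ℂ → ℝ} (hNo : IsOpen N) (huc : Continuous u)
    (hus : ∀ x, x ∉ A → ContDiffAt ℝ 2 u x) (huN : ∀ x ∈ N, x ∉ A → fderiv ℝ u x ≠ 0)
    (hZ : ∀ x ∈ frontier A, u x = 0 → x ∈ N)
    (hum : ∀ x ∈ closedBall (0:ℂ) (3/2), u x = -1) (hup : ∀ x : ℂ, 5/2 ≤ ‖x‖ → u x = 1) :
    ∃ (v : ℂ → ℝ) (R : Set ℂ), Continuous v ∧ IsClosed R ∧ Disjoint R A ∧ (∀ x, x ∉ R → v x = u x) ∧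
      (∀ x ∈ closedBall (0:ℂ) (3/2), v x < 0) ∧ (∀ x : ℂ, 3 ≤ ‖x‖ → v x = 1) ∧
      (∀ x, x ∉ A → v x = 0 → ContDiffAt ℝ 2 v x ∧ fderiv ℝ v x ≠ 0) := by
  set C : Set ℂ := {x | u x = 0} ∩ ((interior A)ᶜ ∩ Nᶜ) with hC
  have hCc : IsClosed C := (isClosed_eq huc continuous_const).inter
    (isOpen_interior.isClosed_compl.inter hNo.isClosed_compl)
  have hΩ : IsOpen Aᶜ := hA.isOpen_compl
  have hCΩ : C ⊆ Aᶜ ∩ ball 0 3 := by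
    rintro x ⟨hx0, hxi, hxN⟩
    have hx0 : u x = 0 := hx0
    refine ⟨fun hxA => hxN (hZ x ?_ hx0), ?_⟩
    · rw [hA.frontier_eq]; exact ⟨hxA, hxi⟩
    · rw [mem_ball_zero_iff]
      by_contra h
      have := hup x (by linarith [not_lt.1 h])
      rw [hx0] at this; norm_num at this
  obtain ⟨ρ, N1, hρ, hρ01, hN1o, hCN1, hρ1, hρs⟩ := smooth_bump hCc (hΩ.inter isOpen_ball) hCΩ
  obtain ⟨ρ2, N2, hρ2, -, hN2o, hRN2, hρ21, hρ2s⟩ := smooth_bump (isClosed_tsupport ρ) hΩ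
    (hρs.trans inter_subset_left)
  set R := tsupport ρ with hR
  have hRc : IsCompact R := (isCompact_closedBall (0:ℂ) 3).of_isClosed_subset (isClosed_tsupport ρ)
    ((hρs.trans inter_subset_right).trans ball_subset_closedBall)
  have hN1R : N1 ⊆ R := fun x hx => subset_tsupport _ (by simp [hρ1 x hx])
  have hucd : ContDiff ℝ 2 (fun x => ρ2 x * u x) := by
    rw [contDiff_iff_contDiffAt]
    intro x
    by_cases hx : x ∈ A
    · have : (tsupport ρ2)ᶜ ∈ 𝓝 x := (isClosed_tsupport ρ2).isOpen_compl.mem_nhds (fun h => hρ2s h hx)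
      have h0 : (fun x => ρ2 x * u x) =ᶠ[𝓝 x] fun _ => 0 := by
        filter_upwards [this] with y hy
        simp [image_eq_zero_of_notMem_tsupport hy]
      exact contDiffAt_const.congr_of_eventuallyEq h0
    · exact hρ2.contDiffAt.mul (hus x hx)
  -- zero of u off N1 outside A lies in N
  have hreg0 : ∀ x, x ∉ A → x ∉ N1 → u x = 0 → fderiv ℝ u x ≠ 0 := by
    intro x hxA hxN1 hx0
    have hxN : x ∈ N := by
      by_contra h
      exact hxN1 (hCN1 ⟨hx0, fun h' => hxA (interior_subset h'), h⟩)
    exact huN x hxN hxA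
  set Kc := R \ N1 with hKc
  have hKcc : IsCompact Kc := hRc.diff hN1o
  have hRA : ∀ x ∈ R, x ∉ A := fun x hx => (hρs hx).1
  have hcbound : ∃ c : ℝ, 0 < c ∧ ∀ x ∈ Kc, c ≤ |u x| + ‖fderiv ℝ u x‖ := by
    rcases Kc.eq_empty_or_nonempty with he | hne
    · exact ⟨1, one_pos, by simp [he]⟩
    have hcont : ContinuousOn (fun x => |u x| + ‖fderiv ℝ u x‖) Kc := by
      intro x hx
      have h2 : ContDiffAt ℝ 1 (fderiv ℝ u) x := (hus x (hRA x hx.1)).fderiv_right (by norm_num)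
      exact (huc.continuousAt.abs.add h2.continuousAt.norm).continuousWithinAt
    obtain ⟨x0, hx0, hmin⟩ := hKcc.exists_isMinOn hne hcont
    refine ⟨_, ?_, fun x hx => hmin hx⟩
    by_cases h : u x0 = 0
    · have := norm_pos_iff.2 (hreg0 x0 (hRA _ hx0.1) hx0.2 h)
      positivity
    · have := abs_pos.2 h
      positivity
  obtain ⟨c, hc, hcK⟩ := hcbound
  have hMb : ∃ M : ℝ, 0 ≤ M ∧ ∀ x ∈ Kc, ‖fderiv ℝ ρ x‖ ≤ M := by
    have hcont : ContinuousOn (fun x => fderiv ℝ ρ x) Kc := (hρ.continuous_fderiv (by norm_num)).continuousOn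
    obtain ⟨M, hM⟩ := hKcc.exists_bound_of_continuousOn hcont
    exact ⟨max M 0, le_max_right _ _, fun x hx => (hM x hx).trans (le_max_left _ _)⟩
  obtain ⟨M, hM0, hM⟩ := hMb
  set ε : ℝ := min (c / (2 * (5 + 4 * M))) (1/16) with hεd
  have hε : 0 < ε := by positivity
  have hε1 : ε ≤ 1/16 := min_le_right _ _
  have hεc : 4 * ε + (ε + 4 * ε * M) < c := by
    have h : ε ≤ c / (2 * (5 + 4 * M)) := min_le_left _ _
    rw [le_div_iff₀ (by positivity)] at h
    nlinarith
  obtain ⟨L, b, hL, hb, hgen⟩ := generic_perturb hucd hε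
  set q : ℂ → ℝ := fun x => L x + b with hq
  have hqc : ContDiff ℝ 2 q := L.contDiff.add contDiff_const
  have hqb : ∀ x ∈ R, |q x| ≤ 4 * ε := by
    intro x hx
    have h3 : ‖x‖ < 3 := mem_ball_zero_iff.1 (hρs hx).2
    have h1 : |L x| ≤ ‖L‖ * ‖x‖ := by simpa using L.le_opNorm x
    have h2 : ‖L‖ * ‖x‖ ≤ ε * 3 := mul_le_mul hL.le h3.le (norm_nonneg _) hε.le
    have := abs_add_le (L x) b
    simp only [hq]
    linarith
  have hq' : ∀ x, HasFDerivAt q L x := fun x => L.hasFDerivAt.add_const b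
  set v : ℂ → ℝ := fun x => u x + ρ x * q x with hv
  have hvR : ∀ x, x ∉ R → v x = u x := by
    intro x hx
    have : ρ x = 0 := image_eq_zero_of_notMem_tsupport hx
    simp [hv, this]
  have hpert : ∀ x, |ρ x * q x| < 1/2 := by
    intro x
    by_cases hx : x ∈ R
    · rw [abs_mul, abs_of_nonneg (hρ01 x).1]
      have := hqb x hx
      nlinarith [(hρ01 x).1, (hρ01 x).2, abs_nonneg (q x)]
    · have : ρ x = 0 := image_eq_zero_of_notMem_tsupport hx
      simp [this]
  refine ⟨v, R, ?_, isClosed_tsupport ρ, ?_, hvR, ?_, ?_, ?_⟩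
  · exact huc.add (hρ.continuous.mul hqc.continuous)
  · exact Set.disjoint_left.2 hRA
  · intro x hx
    have := (abs_lt.1 (hpert x)).2
    simp only [hv, hum x hx]
    linarith
  · intro x hx
    rw [hvR x (fun h => by have := mem_ball_zero_iff.1 (hρs h).2; linarith)]
    exact hup x (by linarith)
  · intro x hxA hvx
    refine ⟨(hus x hxA).add (hρ.contDiffAt.mul hqc.contDiffAt), ?_⟩
    have hvx' : u x + ρ x * q x = 0 := hvx
    by_cases hx1 : x ∈ N1
    · have hev : v =ᶠ[𝓝 x] fun y => ρ2 y * u y + q y := by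
        filter_upwards [hN1o.mem_nhds hx1] with y hy
        simp [hv, hρ1 y hy, hρ21 y (hRN2 (hN1R hy))]
      rw [hev.fderiv_eq]
      have h1 : HasFDerivAt (fun y => ρ2 y * u y) (fderiv ℝ (fun y => ρ2 y * u y) x) x :=
        (hucd.differentiable (by norm_num) x).hasFDerivAt
      rw [show (fun y => ρ2 y * u y + q y) = (fun y => ρ2 y * u y) + q from rfl, (h1.add (hq' x)).fderiv]
      apply hgen
      rw [hρ21 x (hRN2 (hN1R hx1)), one_mul]
      rw [hρ1 x hx1, one_mul] at hvx'
      exact hvx'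
    by_cases hxR : x ∈ R
    · intro h0
      have hu' : HasFDerivAt u (fderiv ℝ u x) x := ((hus x hxA).differentiableAt (by norm_num)).hasFDerivAt
      have hρ' : HasFDerivAt ρ (fderiv ℝ ρ x) x := (hρ.differentiable (by norm_num) x).hasFDerivAt
      have hv' : HasFDerivAt v (fderiv ℝ u x + (ρ x • L + q x • fderiv ℝ ρ x)) x :=
        hu'.add (hρ'.mul (hq' x))
      rw [hv'.fderiv] at h0
      have hxK : x ∈ Kc := ⟨hxR, hx1⟩
      have e1 : ‖fderiv ℝ u x‖ ≤ ε + 4 * ε * M := by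
        have : fderiv ℝ u x = -(ρ x • L + q x • fderiv ℝ ρ x) := eq_neg_of_add_eq_zero_left h0
        rw [this, norm_neg]
        refine (norm_add_le _ _).trans ?_
        rw [norm_smul, norm_smul, Real.norm_eq_abs, Real.norm_eq_abs, abs_of_nonneg (hρ01 x).1]
        refine add_le_add ?_ ?_
        · calc ρ x * ‖L‖ ≤ 1 * ε := mul_le_mul (hρ01 x).2 hL.le (norm_nonneg _) zero_le_one
            _ = ε := one_mul _
        · exact mul_le_mul (hqb x hxR) (hM x hxK) (norm_nonneg _) (by positivity)
      have e2 : |u x| ≤ 4 * ε := by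
        have : u x = -(ρ x * q x) := by linarith
        rw [this, abs_neg, abs_mul, abs_of_nonneg (hρ01 x).1]
        have := hqb x hxR
        nlinarith [(hρ01 x).1, (hρ01 x).2, abs_nonneg (q x)]
      have := hcK x hxK
      linarith
    · have hev : v =ᶠ[𝓝 x] u := by
        filter_upwards [(isClosed_tsupport ρ).isOpen_compl.mem_nhds hxR] with y hy
        exact hvR y hy
      rw [hev.fderiv_eq]
      exact hreg0 x hxA hx1 (by rw [← hvR x hxR]; exact hvx)

open Set Filter Metric Complex in
theorem planar_lemma {A : Set ℂ} (hA : Nice A) :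
    ∃ A' : Set ℂ, A ⊆ A' ∧ Nice A' ∧ A' \ A ⊆ closedBall 0 3 ∧ closedBall 0 1 ⊆ interior A' := by
  obtain ⟨I, T, N, u, hTI, hNo, hTN, huc, hus, huN, hneg, hpos, hum, hup, hch⟩ := planar_u hA
  obtain ⟨v, R, hvc, hRc, hRA, hvR, hvm, hvp, hreg⟩ := planar_perturb hA.1 hNo huc hus huN (by
    intro x hx hx0
    by_contra hxN
    by_cases hxI : x ∈ I
    · exact (hneg x ⟨hxI, fun h => hxN (hTN h)⟩).ne hx0
    · exact (hpos x hx hxI).ne' hx0) hum hup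
  have hcl : IsClosed (A ∪ {x | v x ≤ 0}) := hA.1.union (isClosed_le hvc continuous_const)
  have hint : ∀ x, v x < 0 → x ∈ interior (A ∪ {x | v x ≤ 0}) := by
    intro x hx
    rw [_root_.mem_interior]
    exact ⟨{x | v x < 0}, fun y hy => Or.inr (show v y ≤ 0 from le_of_lt hy), isOpen_lt hvc continuous_const, hx⟩
  refine ⟨A ∪ {x | v x ≤ 0}, subset_union_left, ⟨hcl, ?_⟩, ?_, ?_⟩
  · intro x hx
    rw [hcl.frontier_eq] at hx
    obtain ⟨hxA', hxi⟩ := hx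
    by_cases hxA : x ∈ A
    · have hxZ : x ∈ frontier A := by
        rw [hA.1.frontier_eq]
        exact ⟨hxA, fun h => hxi (interior_mono subset_union_left h)⟩
      have hxR : x ∉ R := fun h => Set.disjoint_left.1 hRA h hxA
      by_cases hxI : x ∈ I
      · by_cases hxT : x ∈ T
        · obtain ⟨c, hxc, -, hc⟩ := hch x hxT
          refine ⟨c.restrOpen Rᶜ hRc.isOpen_compl, ?_, ?_⟩
          · rw [OpenPartialHomeomorph.restrOpen_source]; exact ⟨hxc, hxR⟩
          · intro y hy
            rw [OpenPartialHomeomorph.restrOpen_source] at hy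
            refine Iff.trans ?_ (hc y hy.1)
            rw [← hvR y hy.2]
            rfl
        · exact (hxi (hint x (by rw [hvR x hxR]; exact hneg x ⟨hxI, hxT⟩))).elim
      · obtain ⟨e, hxe, he⟩ := hA.2 x hxZ
        have ho : IsOpen {x | 0 < v x} := isOpen_lt continuous_const hvc
        refine ⟨e.restrOpen {x | 0 < v x} ho, ?_, ?_⟩
        · rw [OpenPartialHomeomorph.restrOpen_source]
          refine ⟨hxe, ?_⟩
          show 0 < v x
          rw [hvR x hxR]; exact hpos x hxZ hxI
        · intro y hy
          rw [OpenPartialHomeomorph.restrOpen_source] at hy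
          refine Iff.trans ?_ (he y hy.1)
          have : 0 < v y := hy.2
          constructor
          · rintro (h | h)
            · exact h
            · exact absurd this (not_lt.2 h)
          · exact Or.inl
    · have hvx : v x ≤ 0 := hxA'.resolve_left hxA
      have hvx0 : v x = 0 := by
        by_contra h
        exact hxi (hint x (lt_of_le_of_ne hvx h))
      obtain ⟨h1, h2⟩ := hreg x hxA hvx0
      obtain ⟨e, hxe, he⟩ := regular_chart h1 h2
      refine ⟨e.restrOpen Aᶜ hA.1.isOpen_compl, ?_, ?_⟩
      · rw [OpenPartialHomeomorph.restrOpen_source]; exact ⟨hxe, hxA⟩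
      · intro y hy
        rw [OpenPartialHomeomorph.restrOpen_source] at hy
        show _ ↔ (e y).im ≤ 0
        rw [he]
        exact ⟨fun h => h.resolve_left hy.2, Or.inr⟩
  · rintro x ⟨hx, hxA⟩
    have hvx : v x ≤ 0 := hx.resolve_left hxA
    rw [mem_closedBall_zero_iff]
    by_contra h
    have := hvp x (not_le.1 h).le
    linarith
  · intro x hx
    exact hint x (hvm x (closedBall_subset_closedBall (by norm_num) hx))

open Set Filter Metric Complex in
theorem full_chart {F : Type} [TopologicalSpace F] (hF : IsSurface F) (x : F) {W : Set F}
    (hW : IsOpen W) (hxW : x ∈ W) :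
    ∃ ψ : ℂ → F, IsOpenEmbedding ψ ∧ ψ 0 = x ∧ range ψ ⊆ W := by
  obtain ⟨-, -, -, hch⟩ := hF
  obtain ⟨U, V, hU, hxU, hV, ⟨h⟩⟩ := hch x
  set v := h ⟨x, hxU⟩ with hv
  have hO : IsOpen {y : V | ((h.symm y : U) : F) ∈ W} :=
    hW.preimage (continuous_subtype_val.comp h.symm.continuous)
  have hO' : IsOpen (Subtype.val '' {y : V | ((h.symm y : U) : F) ∈ W}) := hV.isOpenMap_subtype_val _ hO
  obtain ⟨r, hr, hball⟩ := Metric.isOpen_iff.1 hO' v.1 ⟨v, by show ((h.symm v : U) : F) ∈ W; simp [hv, hxW], rfl⟩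
  set b := OpenPartialHomeomorph.univBall v.1 r with hb
  have hbs : b.source = univ := OpenPartialHomeomorph.univBall_source _ _
  have hbm : ∀ z, b z ∈ ball v.1 r := by
    intro z
    rw [← OpenPartialHomeomorph.univBall_target v.1 hr]
    exact b.map_source (by rw [hbs]; trivial)
  have hbV : ∀ z, b z ∈ V := by
    intro z
    obtain ⟨y, -, hy⟩ := hball (hbm z)
    rw [← hy]; exact y.2
  have hbo : IsOpenEmbedding b := b.isOpenEmbedding hbs
  set g : EuclideanSpace ℝ (Fin 2) → V := fun z => ⟨b z, hbV z⟩ with hg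
  have hgo : IsOpenEmbedding g := IsOpenEmbedding.of_comp g hV.isOpenEmbedding_subtypeVal hbo
  set k : ℂ ≃ₜ EuclideanSpace ℝ (Fin 2) := Complex.orthonormalBasisOneI.repr.toHomeomorph with hk
  refine ⟨fun z => ((h.symm (g (k z)) : U) : F), ?_, ?_, ?_⟩
  · exact hU.isOpenEmbedding_subtypeVal.comp (h.symm.isOpenEmbedding.comp (hgo.comp k.isOpenEmbedding))
  · have hk0 : k 0 = 0 := map_zero Complex.orthonormalBasisOneI.repr
    have : g (k 0) = v := by
      apply Subtype.ext
      simp only [hg, hk0, hb, OpenPartialHomeomorph.univBall_apply_zero]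
    show ((h.symm (g (k 0)) : U) : F) = x
    rw [this, hv]; simp
  · rintro _ ⟨z, rfl⟩
    obtain ⟨y, hy, hy'⟩ := hball (hbm (k z))
    have : g (k z) = y := Subtype.ext hy'.symm
    simp only [this]
    exact hy

open Set Filter Metric Complex in
theorem nice_step {F : Type} [TopologicalSpace F] [T2Space F] {N : Set F} (hN : Nice N) (hNc : IsCompact N)
    {ψ : ℂ → F} (hψ : IsOpenEmbedding ψ) :
    ∃ N' : Set F, Nice N' ∧ IsCompact N' ∧ interior N ⊆ interior N' ∧ ψ '' closedBall 0 1 ⊆ interior N' := by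
  set E := hψ.toOpenPartialHomeomorph ψ with hE
  have hEψ : ∀ z, E z = ψ z := fun z => rfl
  have hEs : E.source = univ := by simp [hE]
  have hEt : E.target = range ψ := by simp [hE]
  have hEsymm : ∀ z, E.symm (ψ z) = z := fun z => E.left_inv (by rw [hEs]; trivial)
  have hA : Nice (ψ ⁻¹' N) := by
    refine ⟨hN.1.preimage hψ.continuous, ?_⟩
    intro x hx
    rw [← hψ.isOpenMap.preimage_frontier_eq_frontier_preimage hψ.continuous] at hx
    obtain ⟨e, hxe, he⟩ := hN.2 _ hx
    refine ⟨E.trans e, ?_, ?_⟩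
    · rw [OpenPartialHomeomorph.trans_source, hEs]
      exact ⟨trivial, hxe⟩
    · intro y hy
      rw [OpenPartialHomeomorph.trans_source, hEs] at hy
      exact he (ψ y) hy.2
  obtain ⟨A', hAA', hA'N, hA'b, hA'i⟩ := planar_lemma hA
  have hNeq : N ∪ ψ '' A' = N ∪ ψ '' (A' ∩ closedBall 0 3) := by
    apply Subset.antisymm
    · rintro _ (h | ⟨z, hz, rfl⟩)
      · exact Or.inl h
      · by_cases hzA : z ∈ ψ ⁻¹' N
        · exact Or.inl hzA
        · exact Or.inr ⟨z, ⟨hz, hA'b ⟨hz, hzA⟩⟩, rfl⟩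
    · exact union_subset_union_right _ (image_mono inter_subset_left)
  have hcomp : IsCompact (N ∪ ψ '' A') := by
    rw [hNeq]
    exact hNc.union (((isCompact_closedBall (0:ℂ) 3).inter_left hA'N.1).image hψ.continuous)
  have hpre : ∀ z, ψ z ∈ N ∪ ψ '' A' ↔ z ∈ A' := by
    intro z
    constructor
    · rintro (h | ⟨z', hz', h⟩)
      · exact hAA' h
      · rw [← hψ.injective h]; exact hz'
    · exact fun h => Or.inr ⟨z, h, rfl⟩
  refine ⟨N ∪ ψ '' A', ⟨hcomp.isClosed, ?_⟩, hcomp, interior_mono subset_union_left, ?_⟩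
  · intro x hx
    by_cases hxr : x ∈ range ψ
    · obtain ⟨z, rfl⟩ := hxr
      have hz : z ∈ frontier A' := by
        have h1 : z ∈ ψ ⁻¹' frontier (N ∪ ψ '' A') := hx
        rw [hψ.isOpenMap.preimage_frontier_eq_frontier_preimage hψ.continuous] at h1
        have h2 : ψ ⁻¹' (N ∪ ψ '' A') = A' := by ext z; exact hpre z
        rwa [h2] at h1
      obtain ⟨e, hze, he⟩ := hA'N.2 z hz
      refine ⟨E.symm.trans e, ?_, ?_⟩
      · rw [OpenPartialHomeomorph.trans_source]
        refine ⟨?_, ?_⟩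
        · rw [OpenPartialHomeomorph.symm_source, hEt]; exact ⟨z, rfl⟩
        · show E.symm (ψ z) ∈ e.source
          rw [hEsymm]; exact hze
      · intro y hy
        rw [OpenPartialHomeomorph.trans_source, OpenPartialHomeomorph.symm_source, hEt] at hy
        obtain ⟨⟨z', rfl⟩, hy2⟩ := hy
        have hy2 : E.symm (ψ z') ∈ e.source := hy2
        show _ ↔ (e (E.symm (ψ z'))).im ≤ 0
        rw [hEsymm] at hy2 ⊢
        rw [hpre]
        exact he z' hy2
    · rw [hcomp.isClosed.frontier_eq] at hx
      have hxN : x ∈ N := by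
        rcases hx.1 with h | ⟨z, -, h⟩
        · exact h
        · exact (hxr ⟨z, h⟩).elim
      have hxf : x ∈ frontier N := by
        rw [hN.1.frontier_eq]
        exact ⟨hxN, fun h => hx.2 (interior_mono subset_union_left h)⟩
      obtain ⟨e, hxe, he⟩ := hN.2 x hxf
      have hcl : IsClosed (ψ '' closedBall 0 3) := ((isCompact_closedBall (0:ℂ) 3).image hψ.continuous).isClosed
      refine ⟨e.restrOpen (ψ '' closedBall 0 3)ᶜ hcl.isOpen_compl, ?_, ?_⟩
      · rw [OpenPartialHomeomorph.restrOpen_source]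
        exact ⟨hxe, fun h => hxr (image_subset_range _ _ h)⟩
      · intro y hy
        rw [OpenPartialHomeomorph.restrOpen_source] at hy
        refine Iff.trans ?_ (he y hy.1)
        rw [hNeq]
        constructor
        · rintro (h | ⟨z, hz, rfl⟩)
          · exact h
          · exact (hy.2 ⟨z, hz.2, rfl⟩).elim
        · exact Or.inl
  · have : IsOpen (ψ '' interior A') := hψ.isOpenMap _ isOpen_interior
    refine (image_mono hA'i).trans (interior_maximal ?_ this)
    exact (image_mono interior_subset).trans subset_union_right

open Set Filter Metric Complex in
theorem exists_nice {F : Type} [TopologicalSpace F] (hF : IsSurface F) {K : Set F} (hK : IsCompact K) :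
    ∃ N : Set F, Nice N ∧ IsCompact N ∧ K ⊆ interior N := by
  have := hF.2.1
  have hch := fun x : F => full_chart hF x isOpen_univ (mem_univ x)
  choose ψ hψ hψ0 _ using hch
  have hind : ∀ t : Finset F, ∃ N : Set F, Nice N ∧ IsCompact N ∧ ∀ x ∈ t, ψ x '' closedBall 0 1 ⊆ interior N := by
    classical
    intro t
    induction t using Finset.induction_on with
    | empty => exact ⟨∅, ⟨isClosed_empty, by simp⟩, isCompact_empty, by simp⟩
    | insert a s _ ih =>
      obtain ⟨N, h1, h2, h3⟩ := ih
      obtain ⟨N', h1', h2', h3', h4'⟩ := nice_step h1 h2 (hψ a)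
      refine ⟨N', h1', h2', ?_⟩
      intro x hx
      rcases Finset.mem_insert.1 hx with rfl | hx
      · exact h4'
      · exact (h3 x hx).trans h3'
  obtain ⟨t, -, ht⟩ := hK.elim_nhds_subcover (fun x => ψ x '' ball 0 1) (fun x _ => by
    refine ((hψ x).isOpenMap _ isOpen_ball).mem_nhds ⟨0, mem_ball_self one_pos, hψ0 x⟩)
  obtain ⟨N, h1, h2, h3⟩ := hind t
  refine ⟨N, h1, h2, ht.trans (iUnion₂_subset fun x hx => ?_)⟩
  exact (image_mono ball_subset_closedBall).trans (h3 x hx)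

open Set Filter Metric Complex in
theorem exists_defining {F : Type} [TopologicalSpace F] (hF : IsSurface F) (Z : Set F) (hZ : IsClosed Z) :
    ∃ g : F → ℝ, Continuous g ∧ (∀ x, 0 ≤ g x) ∧ ∀ x, g x = 0 ↔ x ∈ Z := by
  have := hF.2.1
  have := hF.2.2.1
  have : WeaklyLocallyCompactSpace F := ⟨fun x => by
    obtain ⟨ψ, hψ, hψ0, -⟩ := full_chart hF x isOpen_univ (mem_univ x)
    refine ⟨ψ '' closedBall 0 1, (isCompact_closedBall (0:ℂ) 1).image hψ.continuous, ?_⟩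
    refine mem_of_superset ((hψ.isOpenMap _ isOpen_ball).mem_nhds ⟨0, mem_ball_self one_pos, hψ0⟩)
      (image_mono ball_subset_closedBall)⟩
  let _ : MetricSpace F := TopologicalSpace.metrizableSpaceMetric F
  rcases Z.eq_empty_or_nonempty with rfl | hne
  · exact ⟨fun _ => 1, continuous_const, fun _ => zero_le_one, by simp⟩
  · exact ⟨fun x => infDist x Z, continuous_infDist_pt Z, fun _ => infDist_nonneg,
      fun x => (hZ.mem_iff_infDist_zero hne).symm⟩

open Set Filter Metric Complex in
theorem half_chart {F : Type} [TopologicalSpace F] {N : Set F} (hN : Nice N) {x : F} (hx : x ∈ frontier N) :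
    ∃ ψ : ℂ → F, IsOpenEmbedding ψ ∧ ψ 0 = x ∧ (∀ z, ψ z ∈ N ↔ z.im ≤ 0) ∧
      (∀ z, ψ z ∈ frontier N ↔ z.im = 0) := by
  obtain ⟨e, hpe, he⟩ := hN.2 x hx
  have him : (e x).im = 0 := (nice_frontier_iff he hpe).1 hx
  obtain ⟨δ, hδ, hball⟩ := Metric.isOpen_iff.1 e.open_target (e x) (e.map_source hpe)
  set b := OpenPartialHomeomorph.univBall (e x) δ with hb
  have hbt : ∀ z, b z ∈ e.target := fun z => hball (by
    rw [← OpenPartialHomeomorph.univBall_target (e x) hδ]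
    exact b.map_source (by rw [hb, OpenPartialHomeomorph.univBall_source]; trivial))
  have hψ : IsOpenEmbedding (b.trans e.symm) := by
    apply OpenPartialHomeomorph.isOpenEmbedding
    ext z
    simp [hb]
    exact hbt z
  have hv : ∀ z, (b.trans e.symm) z = e.symm (b z) := fun z => rfl
  have hs : ∀ z, e.symm (b z) ∈ e.source := fun z => e.map_target (hbt z)
  refine ⟨b.trans e.symm, hψ, ?_, ?_, ?_⟩
  · simp [hb, e.left_inv hpe]
  · intro z
    obtain ⟨t, ht, hti⟩ := univBall_im (e x) hδ him z
    rw [hv, he _ (hs z), e.right_inv (hbt z), hti, ← not_lt, mul_pos_iff_of_pos_left ht, not_lt]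
  · intro z
    obtain ⟨t, ht, hti⟩ := univBall_im (e x) hδ him z
    rw [hv, nice_frontier_iff he (hs z), e.right_inv (hbt z), hti, mul_eq_zero]
    exact ⟨fun h => h.resolve_left ht.ne', Or.inr⟩

/-- The double of `N` along its frontier. -/
def DoubleSet {F : Type} (N : Set F) (g : F → ℝ) : Set (F × ℝ) := {m | m.1 ∈ N ∧ m.2 ^ 2 = g m.1}

open Set Filter Metric Complex in
theorem double_chart_ne {F : Type} [TopologicalSpace F] (hF : IsSurface F) {N : Set F} (hN : Nice N)
    {g : F → ℝ} (hgc : Continuous g) (hg0 : ∀ x, 0 ≤ g x) (hgZ : ∀ x, g x = 0 ↔ x ∈ frontier N)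
    (m : DoubleSet N g) (hm : m.1.2 ≠ 0) :
    ∃ S : Set (DoubleSet N g), IsOpen S ∧ m ∈ S ∧ Nonempty (S ≃ₜ ℂ) := by
  have hσ : ∃ σ : ℝ, σ * σ = 1 ∧ 0 < σ * m.1.2 := by
    rcases lt_or_gt_of_ne hm with h | h
    · exact ⟨-1, by norm_num, by linarith⟩
    · exact ⟨1, by norm_num, by linarith⟩
  obtain ⟨σ, hσ, hσm⟩ := hσ
  have hint : ∀ y ∈ N, g y ≠ 0 → y ∈ interior N := by
    intro y hy h
    by_contra h'
    apply h
    rw [hgZ, hN.1.frontier_eq]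
    exact ⟨hy, h'⟩
  have hmi : m.1.1 ∈ interior N := hint _ m.2.1 (by rw [← m.2.2]; positivity)
  obtain ⟨ψ, hψ, hψ0, hψr⟩ := full_chart hF m.1.1 isOpen_interior hmi
  have hpos : ∀ z, 0 < g (ψ z) := by
    intro z
    refine lt_of_le_of_ne (hg0 _) (fun h => ?_)
    have := (hgZ (ψ z)).1 h.symm
    rw [hN.1.frontier_eq] at this
    exact this.2 (hψr ⟨z, rfl⟩)
  set φ : ℂ → DoubleSet N g := fun z => ⟨(ψ z, σ * √(g (ψ z))), interior_subset (hψr ⟨z, rfl⟩), by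
    show (σ * √(g (ψ z))) ^ 2 = g (ψ z)
    rw [mul_pow, Real.sq_sqrt (hg0 _), pow_two, hσ, one_mul]⟩ with hφ
  have hφc : Continuous φ := by
    refine Continuous.subtype_mk (hψ.continuous.prodMk ?_) _
    exact continuous_const.mul (Real.continuous_sqrt.comp (hgc.comp hψ.continuous))
  have hφe : IsEmbedding φ :=
    IsEmbedding.of_comp hφc (continuous_fst.comp continuous_subtype_val) hψ.isEmbedding
  have hsq : ∀ (y : DoubleSet N g), 0 < σ * y.1.2 → σ * √(g y.1.1) = y.1.2 := by
    intro y hy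
    have : g y.1.1 = (σ * y.1.2) ^ 2 := by rw [mul_pow, ← y.2.2, pow_two σ, hσ, one_mul]
    rw [this, Real.sqrt_sq hy.le, ← mul_assoc, hσ, one_mul]
  have hrange : range φ = {y : DoubleSet N g | 0 < σ * y.1.2 ∧ y.1.1 ∈ range ψ} := by
    ext y
    constructor
    · rintro ⟨z, rfl⟩
      refine ⟨?_, ⟨z, rfl⟩⟩
      show 0 < σ * (σ * √(g (ψ z)))
      rw [← mul_assoc, hσ, one_mul]
      exact Real.sqrt_pos.2 (hpos z)
    · rintro ⟨h1, ⟨z, hz⟩⟩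
      refine ⟨z, Subtype.ext (Prod.ext hz ?_)⟩
      show σ * √(g (ψ z)) = y.1.2
      rw [hz]; exact hsq y h1
  refine ⟨range φ, ?_, ?_, ⟨hφe.toHomeomorph.symm⟩⟩
  · rw [hrange]
    have hc : Continuous (fun y : DoubleSet N g => σ * y.1.2) := by fun_prop
    refine (isOpen_lt continuous_const hc).inter ?_
    exact hψ.isOpen_range.preimage (continuous_fst.comp continuous_subtype_val)
  · rw [hrange]
    exact ⟨hσm, ⟨0, hψ0⟩⟩

open Set Filter Metric Complex in
theorem double_chart_zero {F : Type} [TopologicalSpace F] {N : Set F} (hN : Nice N)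
    {g : F → ℝ} (hgc : Continuous g) (hg0 : ∀ x, 0 ≤ g x) (hgZ : ∀ x, g x = 0 ↔ x ∈ frontier N)
    (m : DoubleSet N g) (hm : m.1.2 = 0) :
    ∃ S : Set (DoubleSet N g), IsOpen S ∧ m ∈ S ∧ Nonempty (S ≃ₜ ℂ) := by
  have hmf : m.1.1 ∈ frontier N := by rw [← hgZ, ← m.2.2, hm]; norm_num
  obtain ⟨ψ, hψ, hψ0, hψN, hψZ⟩ := half_chart hN hmf
  set E := hψ.toOpenPartialHomeomorph ψ with hE
  have hEs : E.source = univ := by simp [hE]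
  have hEt : E.target = range ψ := by simp [hE]
  have hEsymm : ∀ z, E.symm (ψ z) = z := fun z => E.left_inv (by rw [hEs]; trivial)
  set S : Set (DoubleSet N g) := {y | y.1.1 ∈ range ψ} with hS
  have hSo : IsOpen S := hψ.isOpen_range.preimage (continuous_fst.comp continuous_subtype_val)
  set C : S → ℂ := fun y => E.symm y.1.1.1 with hC
  have hCc : Continuous C := by
    have : ContinuousOn E.symm (range ψ) := by rw [← hEt]; exact E.continuousOn_symm
    exact this.comp_continuous (continuous_fst.comp (continuous_subtype_val.comp continuous_subtype_val))
      (fun y => y.2)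
  have hψC : ∀ y : S, ψ (C y) = y.1.1.1 := by
    intro y
    obtain ⟨z, hz⟩ := y.2
    simp only [hC]
    rw [← hz, hEsymm]
  have hCim : ∀ y : S, (C y).im ≤ 0 := fun y => by
    rw [← hψN, hψC]; exact y.1.2.1
  have hC0 : ∀ y : S, (C y).im = 0 ↔ y.1.1.2 = 0 := fun y => by
    rw [← hψZ, hψC, ← hgZ, ← y.1.2.2]
    simp
  set fold : ℂ → ℂ := fun z => (z.re : ℂ) + ((-|z.im| : ℝ) : ℂ) * Complex.I with hfold
  have hfre : ∀ z, (fold z).re = z.re := fun z => by simp [hfold]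
  have hfim : ∀ z, (fold z).im = -|z.im| := fun z => by simp [hfold]
  have hfc : Continuous fold := by
    simp only [hfold]; fun_prop
  set τ : ℂ → ℝ := fun z => if 0 ≤ z.im then √(g (ψ (fold z))) else -√(g (ψ (fold z))) with hτ
  have hgfold : ∀ z, g (ψ (fold z)) = 0 ↔ z.im = 0 := by
    intro z; rw [hgZ, hψZ, hfim]; simp
  have hsqc : Continuous (fun z => √(g (ψ (fold z)))) :=
    Real.continuous_sqrt.comp (hgc.comp (hψ.continuous.comp hfc))
  have hτc : Continuous τ := by
    refine Continuous.if_le hsqc hsqc.neg continuous_const Complex.continuous_im ?_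
    intro z hz
    rw [(hgfold z).2 hz.symm]; simp
  have hτ2 : ∀ z, τ z ^ 2 = g (ψ (fold z)) := by
    intro z
    simp only [hτ]
    split_ifs
    · exact Real.sq_sqrt (hg0 _)
    · rw [neg_sq]; exact Real.sq_sqrt (hg0 _)
  set tofn : S → ℂ := fun y => ((C y).re : ℂ) + ((if 0 ≤ y.1.1.2 then -(C y).im else (C y).im : ℝ) : ℂ) * Complex.I with hto
  have htore : ∀ y, (tofn y).re = (C y).re := fun y => by simp [hto]
  have htoim : ∀ y, (tofn y).im = if 0 ≤ y.1.1.2 then -(C y).im else (C y).im := fun y => by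
    simp only [hto]; simp
  have htoc : Continuous tofn := by
    refine (Complex.continuous_ofReal.comp (Complex.continuous_re.comp hCc)).add
      ((Complex.continuous_ofReal.comp ?_).mul continuous_const)
    refine Continuous.if_le (Complex.continuous_im.comp hCc).neg (Complex.continuous_im.comp hCc)
      continuous_const (by fun_prop) ?_
    intro y hy
    have := (hC0 y).2 hy.symm
    simp [this]
  have hNmem : ∀ z, ψ (fold z) ∈ N := fun z => by rw [hψN, hfim]; simp
  set inv : ℂ → S := fun z => ⟨⟨(ψ (fold z), τ z), hNmem z, hτ2 z⟩, ⟨fold z, rfl⟩⟩ with hinv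
  have hinvc : Continuous inv :=
    Continuous.subtype_mk (Continuous.subtype_mk ((hψ.continuous.comp hfc).prodMk hτc) _) _
  have hCinv : ∀ z, C (inv z) = fold z := fun z => hEsymm _
  refine ⟨S, hSo, ⟨0, hψ0⟩, ⟨⟨⟨tofn, inv, ?_, ?_⟩, htoc, hinvc⟩⟩⟩
  · intro y
    have hff : fold (tofn y) = C y := by
      apply Complex.ext
      · rw [hfre, htore]
      · rw [hfim, htoim]
        split_ifs
        · rw [abs_neg, abs_of_nonpos (hCim y), neg_neg]
        · rw [abs_of_nonpos (hCim y), neg_neg]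
    apply Subtype.ext
    apply Subtype.ext
    apply Prod.ext
    · show ψ (fold (tofn y)) = _
      rw [hff, hψC]
    · show τ (tofn y) = _
      simp only [hτ, hff, hψC, htoim]
      by_cases h : 0 ≤ y.1.1.2
      · have : 0 ≤ -(C y).im := by linarith [hCim y]
        rw [if_pos h, if_pos this, ← y.1.2.2, Real.sqrt_sq h]
      · have : ¬ 0 ≤ (C y).im := by
          intro h0
          exact h (((hC0 y).1 (le_antisymm (hCim y) h0)).ge)
        rw [if_neg h, if_neg this, ← y.1.2.2, Real.sqrt_sq_eq_abs, abs_of_neg (not_le.1 h), neg_neg]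
  · intro z
    apply Complex.ext
    · rw [htore, hCinv, hfre]
    · rw [htoim, hCinv, hfim]
      show (if 0 ≤ τ z then _ else _) = _
      by_cases h : 0 ≤ z.im
      · have : 0 ≤ τ z := by simp only [hτ, if_pos h]; exact Real.sqrt_nonneg _
        rw [if_pos this, neg_neg, abs_of_nonneg h]
      · have : ¬ 0 ≤ τ z := by
          simp only [hτ, if_neg h]
          have hp : 0 < g (ψ (fold z)) := lt_of_le_of_ne (hg0 _) (fun h' => h (((hgfold z).1 h'.symm).ge))
          have := Real.sqrt_pos.2 hp
          linarith
        rw [if_neg this, abs_of_neg (not_le.1 h), neg_neg]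

/-- If a compact space embeds into a surface, then it embeds into some compact
surface. -/
theorem embeds_into_compact_surface_of_embeds_into_surface
    (K : Type) [TopologicalSpace K] [CompactSpace K]
    (F : Type) [TopologicalSpace F] (hF : IsSurface F)
    (f : K → F) (hf : IsEmbedding f) :
    ∃ (S : Type) (_ : TopologicalSpace S), IsSurface S ∧ CompactSpace S ∧
      ∃ g : K → S, IsEmbedding g := by
  obtain ⟨x0⟩ := hF.1
  have := hF.2.1
  have := hF.2.2.1
  have hK : IsCompact (Set.range f ∪ {x0}) := (isCompact_range hf.continuous).union isCompact_singleton
  obtain ⟨N, hN, hNc, hKN⟩ := exists_nice hF hK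
  obtain ⟨g, hgc, hg0, hgZ⟩ := exists_defining hF (frontier N) isClosed_frontier
  have hsq : Continuous (fun x => √(g x)) := Real.continuous_sqrt.comp hgc
  have hcomp : IsCompact (DoubleSet N g) := by
    have : DoubleSet N g = (fun x => (x, √(g x))) '' N ∪ (fun x => (x, -√(g x))) '' N := by
      ext ⟨x, t⟩
      constructor
      · rintro ⟨h1, h2⟩
        have h1 : x ∈ N := h1
        have h2 : t ^ 2 = g x := h2
        rcases le_total 0 t with h | h
        · exact Or.inl ⟨x, h1, Prod.ext rfl (by show √(g x) = t; rw [← h2, Real.sqrt_sq h])⟩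
        · exact Or.inr ⟨x, h1, Prod.ext rfl (by
            show -√(g x) = t; rw [← h2, Real.sqrt_sq_eq_abs, abs_of_nonpos h, neg_neg])⟩
      · rintro (⟨y, hy, h⟩ | ⟨y, hy, h⟩)
        · obtain ⟨rfl, rfl⟩ := Prod.ext_iff.1 h
          exact ⟨hy, Real.sq_sqrt (hg0 _)⟩
        · obtain ⟨rfl, rfl⟩ := Prod.ext_iff.1 h
          exact ⟨hy, by show (-√(g y)) ^ 2 = g y; rw [neg_sq]; exact Real.sq_sqrt (hg0 _)⟩
    rw [this]
    exact (hNc.image (continuous_id.prodMk hsq)).union (hNc.image (continuous_id.prodMk hsq.neg))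
  have hmem : ∀ x ∈ N, ((x, √(g x)) : F × ℝ) ∈ DoubleSet N g := fun x hx => ⟨hx, Real.sq_sqrt (hg0 _)⟩
  have hfN : ∀ k, f k ∈ N := fun k => interior_subset (hKN (Or.inl ⟨k, rfl⟩))
  refine ⟨DoubleSet N g, inferInstance, ⟨?_, inferInstance, inferInstance, ?_⟩,
    isCompact_iff_compactSpace.1 hcomp, fun k => ⟨(f k, √(g (f k))), hmem _ (hfN k)⟩, ?_⟩
  · exact ⟨⟨_, hmem x0 (interior_subset (hKN (Or.inr rfl)))⟩⟩
  · intro m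
    obtain ⟨S, hS, hmS, ⟨h⟩⟩ : ∃ S : Set (DoubleSet N g), IsOpen S ∧ m ∈ S ∧ Nonempty (S ≃ₜ ℂ) := by
      by_cases hm : m.1.2 = 0
      · exact double_chart_zero hN hgc hg0 hgZ m hm
      · exact double_chart_ne hF hN hgc hg0 hgZ m hm
    exact ⟨S, Set.univ, hS, hmS, isOpen_univ,
      ⟨(h.trans Complex.orthonormalBasisOneI.repr.toHomeomorph).trans (Homeomorph.Set.univ _).symm⟩⟩
  · refine IsEmbedding.of_comp ?_ (continuous_fst.comp continuous_subtype_val) hf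
    exact Continuous.subtype_mk (hf.continuous.prodMk (hsq.comp hf.continuous)) _
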